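/- Let m ≥ 1, n ≥ 1, D ≥ 1 be integers. For every positive integer N there exists a constant γ depending only on m, n, D, N such that the following holds. Let S ⊆ ℝ^n be a finite set with |S| ≤ N and diameter at most 1, and for each x ∈ S let G(x) ⊆ 𝒫⃗ be convex. Suppose that for every subset S′ ⊆ S with |S′| ≤ 2^(D·binom(n+m−1, n)) there exists F^{S′} ∈ C^m(ℝ^n,ℝ^D) with ‖F^{S′}‖_{C^m(ℝ^n,ℝ^D)} ≤ 1 and J_x F^{S′} ∈ G(x) for all x ∈ S′. Then there exists F ∈ C^m(ℝ^n,ℝ^D) with ‖F‖_{C^m(ℝ^n,ℝ^D)} ≤ γ and J_x F ∈ G(x) for all x ∈ S. -/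

import Mathlib

open scoped BigOperators Classical

noncomputable section

/-- `En n` is Euclidean space `ℝ^n`. -/
abbrev En (n : ℕ) : Type := EuclideanSpace ℝ (Fin n)

/-- First-order partial derivative `∂_i f` in the `i`-th coordinate direction. -/
noncomputable def pd1 {n : ℕ} (i : Fin n) (f : En n → ℝ) : En n → ℝ :=
  fun x => fderiv ℝ f x (EuclideanSpace.single i 1)

/-- Higher-order partial derivative `∂^α f` for a multi-index `α`. -/
noncomputable def pdalpha {n : ℕ} (α : Fin n → ℕ) (f : En n → ℝ) : En n → ℝ :=
  (List.finRange n).foldr (fun i g => (pd1 i)^[α i] g) f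

/-- First-order partial derivative within a set `s`. -/
noncomputable def pd1W {n : ℕ} (s : Set (En n)) (i : Fin n) (f : En n → ℝ) : En n → ℝ :=
  fun x => fderivWithin ℝ f s x (EuclideanSpace.single i 1)

/-- Higher-order partial derivative `∂^α f` within a set `s`. -/
noncomputable def pdalphaW {n : ℕ} (s : Set (En n)) (α : Fin n → ℕ) (f : En n → ℝ) : En n → ℝ :=
  (List.finRange n).foldr (fun i g => (pd1W s i)^[α i] g) f

/-- `∂^α` of a multivariate polynomial (formal derivative). -/
noncomputable def polyPD {n : ℕ} (α : Fin n → ℕ) (p : MvPolynomial (Fin n) ℝ) :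
    MvPolynomial (Fin n) ℝ :=
  (List.finRange n).foldr (fun i q => (fun r => MvPolynomial.pderiv i r)^[α i] q) p

/-- The value `∂^α p (x)` of the `α`-th derivative of a polynomial at `x`. -/
noncomputable def polyPDval {n : ℕ} (α : Fin n → ℕ) (p : MvPolynomial (Fin n) ℝ) (x : En n) : ℝ :=
  MvPolynomial.eval (fun i => x i) (polyPD α p)

/-- The `(m-1)`-jet (Taylor polynomial of degree `≤ m-1`) of `f` at `x`. -/
noncomputable def jetScalar (m : ℕ) {n : ℕ} (f : En n → ℝ) (x : En n) :
    MvPolynomial (Fin n) ℝ :=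
  ∑ α ∈ (Finset.univ : Finset (Fin n → Fin m)).filter (fun α => (∑ i, (α i : ℕ)) ≤ m - 1),
    MvPolynomial.C (pdalpha (fun i => (α i : ℕ)) f x / ((∏ i, Nat.factorial (α i : ℕ) : ℕ) : ℝ))
      * ∏ i, (MvPolynomial.X i - MvPolynomial.C (x i)) ^ ((α i : ℕ))

/-- The `(m-1)`-jet of `f` at `x`, with derivatives taken within a set `s`. -/
noncomputable def jetScalarW (m : ℕ) {n : ℕ} (s : Set (En n)) (f : En n → ℝ) (x : En n) :
    MvPolynomial (Fin n) ℝ :=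
  ∑ α ∈ (Finset.univ : Finset (Fin n → Fin m)).filter (fun α => (∑ i, (α i : ℕ)) ≤ m - 1),
    MvPolynomial.C (pdalphaW s (fun i => (α i : ℕ)) f x / ((∏ i, Nat.factorial (α i : ℕ) : ℕ) : ℝ))
      * ∏ i, (MvPolynomial.X i - MvPolynomial.C (x i)) ^ ((α i : ℕ))

/-- The vector-valued `(m-1)`-jet `J_x F ∈ 𝒫⃗` of `F : ℝ^n → ℝ^D` at `x`. -/
noncomputable def jetD (m : ℕ) {n D : ℕ} (F : En n → Fin D → ℝ) (x : En n) :
    Fin D → MvPolynomial (Fin n) ℝ :=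
  fun j => jetScalar m (fun y => F y j) x

/-- The vector-valued `(m-1)`-jet of `F` at `x`, derivatives within `s`. -/
noncomputable def jetDW (m : ℕ) {n D : ℕ} (s : Set (En n)) (F : En n → Fin D → ℝ) (x : En n) :
    Fin D → MvPolynomial (Fin n) ℝ :=
  fun j => jetScalarW m s (fun y => F y j) x

/-- Truncation of a polynomial to total degree `≤ k`. -/
noncomputable def truncDeg {n : ℕ} (k : ℕ) (p : MvPolynomial (Fin n) ℝ) :
    MvPolynomial (Fin n) ℝ :=
  ∑ s ∈ p.support.filter (fun s => (s.sum fun _ e => e) ≤ k),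
    MvPolynomial.monomial s (MvPolynomial.coeff s p)

/-- The degree-`k` Taylor truncation of a polynomial at `x` (the jet `J_x p` of order `k`). -/
noncomputable def taylorTrunc {n : ℕ} (k : ℕ) (x : En n) (p : MvPolynomial (Fin n) ℝ) :
    MvPolynomial (Fin n) ℝ :=
  MvPolynomial.bind₁ (fun i => MvPolynomial.X i - MvPolynomial.C (x i))
    (truncDeg k (MvPolynomial.bind₁ (fun i => MvPolynomial.X i + MvPolynomial.C (x i)) p))

/-- The ring multiplication `p ⊙_x q := J_x(pq)` on degree-`k` jets at `x`. -/
noncomputable def odot {n : ℕ} (k : ℕ) (x : En n) (p q : MvPolynomial (Fin n) ℝ) :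
    MvPolynomial (Fin n) ℝ :=
  taylorTrunc k x (p * q)

/-- `(Γ x M)_{x ∈ E, M > 0}` is a shape field with jets of degree `≤ k` and `d` components:
each `Γ x M` is a convex set of `d`-tuples of polynomials of degree `≤ k`, monotone in `M`. -/
def IsShapeField {N : ℕ} (k d : ℕ) (E : Finset (En N))
    (Γ : En N → ℝ → Set (Fin d → MvPolynomial (Fin N) ℝ)) : Prop :=
  (∀ x ∈ E, ∀ M : ℝ, 0 < M → Convex ℝ (Γ x M)) ∧
  (∀ x ∈ E, ∀ M : ℝ, 0 < M → ∀ P ∈ Γ x M, ∀ j, (P j).totalDegree ≤ k) ∧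
  (∀ x ∈ E, ∀ M' M : ℝ, 0 < M' → M' ≤ M → Γ x M' ⊆ Γ x M)

/-- `(C_w, δmax)`-convexity of a shape field with jets of degree `≤ k`. -/
def SFConvex {N : ℕ} (k d : ℕ) (E : Finset (En N))
    (Γ : En N → ℝ → Set (Fin d → MvPolynomial (Fin N) ℝ)) (Cw δmax : ℝ) : Prop :=
  ∀ δ : ℝ, 0 < δ → δ ≤ δmax → ∀ x ∈ E, ∀ M : ℝ, 0 < M →
    ∀ P₁ P₂ : Fin d → MvPolynomial (Fin N) ℝ, P₁ ∈ Γ x M → P₂ ∈ Γ x M →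
    ∀ Q₁ Q₂ : MvPolynomial (Fin N) ℝ, Q₁.totalDegree ≤ k → Q₂.totalDegree ≤ k →
    (∀ α : Fin N → ℕ, (∑ i, α i) ≤ k → ∀ j,
      |polyPDval α (P₁ j - P₂ j) x| ≤ M * δ ^ (k + 1 - ∑ i, α i)) →
    (∀ α : Fin N → ℕ, (∑ i, α i) ≤ k →
      |polyPDval α Q₁ x| ≤ δ ^ (-((∑ i, α i : ℕ) : ℤ)) ∧
      |polyPDval α Q₂ x| ≤ δ ^ (-((∑ i, α i : ℕ) : ℤ))) →
    odot k x Q₁ Q₁ + odot k x Q₂ Q₂ = 1 →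
    (fun j => odot k x (odot k x Q₁ Q₁) (P₁ j) + odot k x (odot k x Q₂ Q₂) (P₂ j))
      ∈ Γ x (Cw * M)

/-- `‖(P^x)_{x ∈ S}‖_{Ẇ^m(S)} ≤ M` : the homogeneous Whitney seminorm bound. -/
def WSemiLE (m : ℕ) {N d : ℕ} (S : Finset (En N))
    (P : En N → Fin d → MvPolynomial (Fin N) ℝ) (M : ℝ) : Prop :=
  ∀ x ∈ S, ∀ y ∈ S, x ≠ y → ∀ α : Fin N → ℕ, (∑ i, α i) ≤ m - 1 → ∀ j,
    |polyPDval α (P x j - P y j) x| ≤ M * dist x y ^ (m - ∑ i, α i)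

/-- The homogeneous Whitney seminorm `‖(P^x)_{x ∈ S}‖_{Ẇ^m(S)}`. -/
noncomputable def WNormHomog (m : ℕ) {N d : ℕ} (S : Finset (En N))
    (P : En N → Fin d → MvPolynomial (Fin N) ℝ) : ℝ :=
  sSup {r : ℝ | ∃ x ∈ S, ∃ y ∈ S, x ≠ y ∧ ∃ α : Fin N → ℕ, (∑ i, α i) ≤ m - 1 ∧ ∃ j : Fin d,
    r = |polyPDval α (P x j - P y j) x| / dist x y ^ (m - ∑ i, α i)}

/-- The lower-order part of the Whitney norm. -/
noncomputable def WNormLow (m : ℕ) {N d : ℕ} (S : Finset (En N))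
    (P : En N → Fin d → MvPolynomial (Fin N) ℝ) : ℝ :=
  sSup {r : ℝ | ∃ x ∈ S, ∃ α : Fin N → ℕ, (∑ i, α i) ≤ m - 1 ∧ ∃ j : Fin d,
    r = |polyPDval α (P x j) x|}

/-- The Whitney norm `‖(P^x)_{x ∈ S}‖_{W^m(S)}`. -/
noncomputable def WNormFull (m : ℕ) {N d : ℕ} (S : Finset (En N))
    (P : En N → Fin d → MvPolynomial (Fin N) ℝ) : ℝ :=
  WNormLow m S P + WNormHomog m S P

/-- `‖F‖_{C^m} ≤ M`: all partials of order `≤ m` of all components bounded by `M`. -/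
def CmLE (m : ℕ) {n D : ℕ} (F : En n → Fin D → ℝ) (M : ℝ) : Prop :=
  ∀ α : Fin n → ℕ, (∑ i, α i) ≤ m → ∀ x : En n, ∀ j, |pdalpha α (fun y => F y j) x| ≤ M

/-- `‖F‖_{Ċ^m} ≤ M`: all partials of order `= m` of all components bounded by `M`. -/
def CmHomogLE (m : ℕ) {n D : ℕ} (F : En n → Fin D → ℝ) (M : ℝ) : Prop :=
  ∀ α : Fin n → ℕ, (∑ i, α i) = m → ∀ x : En n, ∀ j, |pdalpha α (fun y => F y j) x| ≤ M

/-- `‖F‖_{C^{m-1,1}} ≤ M`. -/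
def Cm11LE (m : ℕ) {n D : ℕ} (F : En n → Fin D → ℝ) (M : ℝ) : Prop :=
  (∀ α : Fin n → ℕ, (∑ i, α i) ≤ m - 1 → ∀ x : En n, ∀ j,
    |pdalpha α (fun y => F y j) x| ≤ M) ∧
  (∀ α : Fin n → ℕ, (∑ i, α i) = m - 1 → ∀ j, ∀ x y : En n,
    |pdalpha α (fun z => F z j) x - pdalpha α (fun z => F z j) y| ≤ M * dist x y)

/-- A closed cube in `ℝ^n` with lower corner `a` and side length `δ`. -/
def cube {n : ℕ} (a : En n) (δ : ℝ) : Set (En n) := {y | ∀ i, a i ≤ y i ∧ y i ≤ a i + δ}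

/-- The embedding `ℝ^n → ℝ^{n+D}`, `x ↦ (x, 0)`. -/
noncomputable def embed (n D : ℕ) (x : En n) : En (n + D) :=
  (EuclideanSpace.equiv (Fin (n + D)) ℝ).symm
    (Fin.append (fun i : Fin n => x i) (fun _ : Fin D => (0 : ℝ)))

/-- The projection `ℝ^{n+D} → ℝ^n`, `(x, ξ) ↦ x`. -/
noncomputable def projn (n D : ℕ) (z : En (n + D)) : En n :=
  (EuclideanSpace.equiv (Fin n) ℝ).symm (fun i => z (Fin.castAdd D i))

/-- Restriction of a polynomial on `ℝ^{n+D}` to `ℝ^n × {0}`, as a polynomial on `ℝ^n`. -/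
noncomputable def restrict0 (n D : ℕ) (p : MvPolynomial (Fin (n + D)) ℝ) :
    MvPolynomial (Fin n) ℝ :=
  MvPolynomial.aeval
    (Fin.append (fun i : Fin n => (MvPolynomial.X i : MvPolynomial (Fin n) ℝ))
      (fun _ : Fin D => 0)) p


section PartA1
theorem seminorm_sum_le {V α : Type} [AddCommGroup V] [Module ℝ V] (p : Seminorm ℝ V)
    (J : Finset α) (f : α → V) : p (∑ j ∈ J, f j) ≤ ∑ j ∈ J, p (f j) := by
  induction J using Finset.induction_on with
  | empty => simp
  | insert a J ha ih =>
    rw [Finset.sum_insert ha, Finset.sum_insert ha]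
    exact (map_add_le_add p _ _).trans (by linarith)

theorem pivot_lemma {V α : Type} [AddCommGroup V] [Module ℝ V] [FiniteDimensional ℝ V] (s : ℕ) :
    ∃ K : ℝ, 1 ≤ K ∧ ∀ (p : Seminorm ℝ V) (η : α → V) (X : Finset α) (E : Submodule ℝ V),
      X.card ≤ s → ∃ J ⊆ X, ∃ E' : Submodule ℝ V,
        Module.finrank ℝ E' = Module.finrank ℝ E + J.card ∧
        (∀ v ∈ E', p v ≤ 1 → ∃ a : α → ℝ, (∀ x, |a x| ≤ K) ∧ ∃ e ∈ E, v = e + ∑ j ∈ J, a j • η j) ∧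
        (∀ x ∈ X, x ∉ J → ∃ a : α → ℝ, (∀ x, |a x| ≤ K) ∧ ∃ e ∈ E,
          p (η x - (e + ∑ j ∈ J, a j • η j)) ≤ K) := by
  induction s with
  | zero =>
    refine ⟨1, le_rfl, fun p η X E hX => ⟨∅, by simp, E, by simp, ?_, ?_⟩⟩
    · intro v hv _
      exact ⟨fun _ => 0, by simp, v, hv, by simp⟩
    · intro x hx
      have : X = ∅ := Finset.card_eq_zero.mp (Nat.le_zero.mp hX)
      simp [this] at hx
  | succ s ih =>
    obtain ⟨K, hK1, hK⟩ := ih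
    refine ⟨4 + K + (s + 1) * (2 * K), by nlinarith [(Nat.cast_nonneg s : (0:ℝ) ≤ s)], ?_⟩
    intro p η X E hX
    set K' := 4 + K + (s + 1) * (2 * K) with hK'
    have hs0 : (0:ℝ) ≤ s := Nat.cast_nonneg s
    have hKK' : K ≤ K' := by nlinarith
    have h1K' : 4 ≤ K' := by nlinarith
    let D : α → ℝ := fun x => ⨅ e : E, p (η x - e)
    have hbdd : ∀ x, BddBelow (Set.range fun e : E => p (η x - e)) := fun x =>
      ⟨0, by rintro _ ⟨e, rfl⟩; exact apply_nonneg p _⟩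
    have hDle : ∀ x, ∀ e ∈ E, D x ≤ p (η x - e) := fun x e he => ciInf_le (hbdd x) (⟨e, he⟩ : E)
    have hDex : ∀ x, ∀ c > D x, ∃ e ∈ E, p (η x - e) < c := by
      intro x c hc
      obtain ⟨e, he⟩ := exists_lt_of_ciInf_lt hc
      exact ⟨e, e.2, he⟩
    by_cases hall : ∀ x ∈ X, D x ≤ 1
    · refine ⟨∅, by simp, E, by simp, ?_, ?_⟩
      · intro v hv _
        exact ⟨fun _ => 0, by intro x; simp; linarith, v, hv, by simp⟩
      · intro x hx _
        obtain ⟨e, he, hlt⟩ := hDex x 2 (by linarith [hall x hx])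
        exact ⟨fun _ => 0, by intro x; simp; linarith, e, he, by simp; linarith⟩
    · push Not at hall
      obtain ⟨x0, hx0, hx0D⟩ := hall
      obtain ⟨y, hyX, hymax⟩ := X.exists_max_image D ⟨x0, hx0⟩
      have hDy : 1 < D y := lt_of_lt_of_le hx0D (hymax x0 hx0)
      have hyE : η y ∉ E := by
        intro h
        have := hDle y _ h
        simp at this; linarith
      let E1 := E ⊔ Submodule.span ℝ {η y}
      have hE1 : Module.finrank ℝ E1 = Module.finrank ℝ E + 1 := by
        have h := Submodule.finrank_sup_add_finrank_inf_eq E (Submodule.span ℝ {η y})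
        have hinf : E ⊓ Submodule.span ℝ {η y} = ⊥ := by
          rw [Submodule.eq_bot_iff]
          rintro v ⟨hvE, hvs⟩
          obtain ⟨a, rfl⟩ := Submodule.mem_span_singleton.mp hvs
          by_cases ha : a = 0
          · simp [ha]
          · exfalso; apply hyE
            have := E.smul_mem a⁻¹ hvE
            simpa [smul_smul, ha] using this
        have hne : η y ≠ 0 := fun h => hyE (h ▸ E.zero_mem)
        rw [hinf, finrank_bot, finrank_span_singleton hne] at h
        simpa using h
      obtain ⟨J, hJX, E', hE', ha', hb'⟩ := hK p η (X.erase y) E1 (by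
        rw [Finset.card_erase_of_mem hyX]; omega)
      have hyJ : y ∉ J := fun h => by simpa using hJX h
      have hJs : (J.card : ℝ) ≤ s := by
        have := Finset.card_le_card hJX
        rw [Finset.card_erase_of_mem hyX] at this
        exact_mod_cast (by omega : J.card ≤ s)
      have hnear : ∀ x ∈ X, ∃ e ∈ E, p (η x - e) ≤ 2 * D y := by
        intro x hx
        obtain ⟨e, he, h⟩ := hDex x (2 * D y) (by linarith [hymax x hx])
        exact ⟨e, he, h.le⟩
      choose! ee hee hee2 using hnear
      -- key bound
      have key : ∀ (w e : V) (a : α → ℝ) (t B : ℝ), (∀ x, |a x| ≤ K) → e ∈ E → 0 ≤ B →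
          (∃ e2 ∈ E, p (w - e2) ≤ B * D y) →
          p (w - ((e + t • η y) + ∑ j ∈ J, a j • η j)) ≤ K * D y → |t| ≤ B + K + s * (2 * K) := by
        intro w e a t B ha he hB hw hle
        obtain ⟨e2, he2, hw⟩ := hw
        have h1 : |t| * D y ≤ p (t • η y + (e - e2 + ∑ j ∈ J, a j • ee j)) := by
          by_cases ht : t = 0
          · simp [ht]
          · have : t • η y + (e - e2 + ∑ j ∈ J, a j • ee j) =
              t • (η y - (- t⁻¹) • (e - e2 + ∑ j ∈ J, a j • ee j)) := by
              rw [smul_sub, smul_smul]; simp [ht]; abel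
            rw [this, map_smul_eq_mul, Real.norm_eq_abs]
            refine mul_le_mul_of_nonneg_left (hDle y _ ?_) (abs_nonneg _)
            refine E.smul_mem _ (E.add_mem (E.sub_mem he he2) (E.sum_mem fun j hj => E.smul_mem _ (hee j ?_)))
            exact Finset.mem_of_mem_erase (hJX hj)
        have h2 : t • η y + (e - e2 + ∑ j ∈ J, a j • ee j) =
            (w - e2) - (w - ((e + t • η y) + ∑ j ∈ J, a j • η j)) - ∑ j ∈ J, a j • (η j - ee j) := by
          simp only [smul_sub, Finset.sum_sub_distrib]; abel
        have h3 : p (∑ j ∈ J, a j • (η j - ee j)) ≤ s * (2 * K) * D y := by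
          calc p (∑ j ∈ J, a j • (η j - ee j)) ≤ ∑ j ∈ J, p (a j • (η j - ee j)) := seminorm_sum_le p _ _
            _ ≤ ∑ j ∈ J, K * (2 * D y) := by
              refine Finset.sum_le_sum fun j hj => ?_
              rw [map_smul_eq_mul, Real.norm_eq_abs]
              exact mul_le_mul (ha j) (hee2 j (Finset.mem_of_mem_erase (hJX hj))) (apply_nonneg p _) (by linarith)
            _ = J.card * (K * (2 * D y)) := by simp
            _ ≤ s * (K * (2 * D y)) := by
              apply mul_le_mul_of_nonneg_right hJs; positivity
            _ = _ := by ring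
        have h4 : |t| * D y ≤ (B + K + s * (2 * K)) * D y := by
          rw [h2] at h1
          have := map_sub_le_add p ((w - e2) - (w - ((e + t • η y) + ∑ j ∈ J, a j • η j))) (∑ j ∈ J, a j • (η j - ee j))
          have := map_sub_le_add p (w - e2) (w - ((e + t • η y) + ∑ j ∈ J, a j • η j))
          linarith
        exact le_of_mul_le_mul_right h4 (by linarith)
      have hsum : ∀ (a : α → ℝ) (t : ℝ) (e : V), (e + t • η y) + ∑ j ∈ J, a j • η j =
          e + ∑ j ∈ insert y J, (if j = y then t else a j) • η j := by
        intro a t e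
        rw [Finset.sum_insert hyJ, if_pos rfl, add_assoc]
        congr 2
        refine Finset.sum_congr rfl fun j hj => ?_
        rw [if_neg]; rintro rfl; exact hyJ hj
      have hJy : insert y J ⊆ X := Finset.insert_subset hyX (hJX.trans (Finset.erase_subset _ _))
      refine ⟨insert y J, hJy, E', ?_, ?_, ?_⟩
      · rw [hE', hE1, Finset.card_insert_of_notMem hyJ]; ring
      · intro v hv hpv
        obtain ⟨a, ha, e1, he1, hve⟩ := ha' v hv hpv
        obtain ⟨e, he, z, hz, rfl⟩ := Submodule.mem_sup.mp he1
        obtain ⟨t, rfl⟩ := Submodule.mem_span_singleton.mp hz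
        refine ⟨fun j => if j = y then t else a j, ?_, e, he, by rw [hve, hsum]⟩
        have ht := key v e a t 1 ha he (by norm_num) ⟨0, E.zero_mem, by simp; linarith⟩
          (by rw [← hve]; simp; nlinarith)
        intro x
        dsimp only
        split_ifs
        · nlinarith
        · exact (ha x).trans hKK'
      · intro x hx hxJ
        rw [Finset.mem_insert, not_or] at hxJ
        obtain ⟨a, ha, e1, he1, hve⟩ := hb' x (Finset.mem_erase.mpr ⟨hxJ.1, hx⟩) hxJ.2
        obtain ⟨e, he, z, hz, rfl⟩ := Submodule.mem_sup.mp he1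
        obtain ⟨t, rfl⟩ := Submodule.mem_span_singleton.mp hz
        refine ⟨fun j => if j = y then t else a j, ?_, e, he, ?_⟩
        · have ht := key (η x) e a t 2 ha he (by norm_num) ⟨ee x, hee x hx, hee2 x hx⟩
            (hve.trans (by nlinarith))
          intro x
          dsimp only
          split_ifs
          · nlinarith
          · exact (ha x).trans hKK'
        · rw [← hsum]; exact hve.trans hKK'

end PartA1

section PartA2
/-- Binary hierarchical trees with leaves in `α` and edge data in `E`. -/
inductive HT (α E : Type) : Type
  | leaf (e : E) (x : α) : HT α E
  | node (e : E) (l r : HT α E) : HT α E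

namespace HT

variable {α E V : Type} [AddCommGroup V] [Module ℝ V]

/-- The edge datum of the root. -/
def edge : HT α E → E
  | leaf e _ => e
  | node e _ _ => e

/-- The finite set of leaves. -/
def leaves : HT α E → Finset α
  | leaf _ x => {x}
  | node _ l r => l.leaves ∪ r.leaves

/-- Number of leaves, with multiplicity. -/
def sz : HT α E → ℕ
  | leaf _ _ => 1
  | node _ l r => l.sz + r.sz

theorem sz_pos (t : HT α E) : 1 ≤ t.sz := by
  induction t with
  | leaf e x => simp [sz]
  | node e l r hl hr => simp only [sz]; omega

theorem card_leaves_le (t : HT α E) : t.leaves.card ≤ t.sz := by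
  induction t with
  | leaf e x => simp [sz, leaves]
  | node e l r hl hr =>
    simp only [sz, leaves]
    exact (Finset.card_union_le _ _).trans (by omega)

/-- Total flow through the root edge. -/
def Phi (ξ : α → V) (μ : α → ℝ) (t : HT α E) : V := ∑ x ∈ t.leaves, μ x • ξ x

/-- All edge flows are bounded by `C`. -/
def Bd (p : E → Seminorm ℝ V) (ξ : α → V) (C : ℝ) (μ : α → ℝ) : HT α E → Prop
  | leaf e x => p e (Phi ξ μ (leaf e x)) ≤ C
  | node e l r => p e (Phi ξ μ (node e l r)) ≤ C ∧ Bd p ξ C μ l ∧ Bd p ξ C μ r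

/-- Compatibility of the seminorms along the tree. -/
def Good (p : E → Seminorm ℝ V) (A : ℝ) : HT α E → Prop
  | leaf _ _ => True
  | node e l r => Disjoint l.leaves r.leaves ∧
      ((∀ v, p l.edge v ≤ A * p e v) ∧ (∀ v, p r.edge v ≤ A * p e v) ∧
       (∀ v, p l.edge v ≤ A * p r.edge v) ∧ (∀ v, p r.edge v ≤ A * p l.edge v)) ∧
      Good p A l ∧ Good p A r

variable {p : E → Seminorm ℝ V} {ξ : α → V}

theorem Bd.edge {C : ℝ} {μ : α → ℝ} {t : HT α E} (h : Bd p ξ C μ t) : p t.edge (Phi ξ μ t) ≤ C := by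
  cases t with
  | leaf e x => exact h
  | node e l r => exact h.1

theorem Phi_congr {μ ν : α → ℝ} {t : HT α E} (h : ∀ x ∈ t.leaves, μ x = ν x) :
    Phi ξ μ t = Phi ξ ν t :=
  Finset.sum_congr rfl fun x hx => by rw [h x hx]

theorem Bd.congr {C : ℝ} {μ ν : α → ℝ} {t : HT α E} (hb : Bd p ξ C μ t)
    (h : ∀ x ∈ t.leaves, μ x = ν x) : Bd p ξ C ν t := by
  induction t with
  | leaf e x => unfold Bd at *; rwa [← Phi_congr h]
  | node e l r hl hr =>
    have h1 : p e (Phi ξ ν (node e l r)) ≤ C := by rw [← Phi_congr h]; exact hb.1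
    exact ⟨h1, hl hb.2.1 fun x hx => h x (by simp [leaves, hx]),
      hr hb.2.2 fun x hx => h x (by simp [leaves, hx])⟩

theorem Phi_add (μ ν : α → ℝ) (t : HT α E) :
    Phi ξ (fun x => μ x + ν x) t = Phi ξ μ t + Phi ξ ν t := by
  simp [Phi, add_smul, Finset.sum_add_distrib]

theorem Phi_smul (a : ℝ) (μ : α → ℝ) (t : HT α E) :
    Phi ξ (fun x => a * μ x) t = a • Phi ξ μ t := by
  simp [Phi, mul_smul, Finset.smul_sum]

theorem Phi_sum {β : Type} (J : Finset β) (μ : β → α → ℝ) (t : HT α E) :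
    Phi ξ (fun x => ∑ j ∈ J, μ j x) t = ∑ j ∈ J, Phi ξ (μ j) t := by
  simp only [Phi, Finset.sum_smul]; rw [Finset.sum_comm]

theorem Phi_zero (t : HT α E) : Phi ξ (fun _ => 0) t = 0 := by simp [Phi]

theorem Bd.add {C C' : ℝ} {μ ν : α → ℝ} {t : HT α E} (h : Bd p ξ C μ t) (h' : Bd p ξ C' ν t) :
    Bd p ξ (C + C') (fun x => μ x + ν x) t := by
  induction t with
  | leaf e x =>
    unfold Bd at *; rw [Phi_add]; exact (map_add_le_add _ _ _).trans (add_le_add h h')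
  | node e l r hl hr =>
    have h1 : p e (Phi ξ (fun x => μ x + ν x) (node e l r)) ≤ C + C' := by
      rw [Phi_add]; exact (map_add_le_add _ _ _).trans (add_le_add h.1 h'.1)
    exact ⟨h1, hl h.2.1 h'.2.1, hr h.2.2 h'.2.2⟩

theorem Bd.smul {C : ℝ} {μ : α → ℝ} {t : HT α E} (a : ℝ) (h : Bd p ξ C μ t) :
    Bd p ξ (|a| * C) (fun x => a * μ x) t := by
  have key : ∀ (e : E) (s : HT α E), p e (Phi ξ μ s) ≤ C →
      p e (Phi ξ (fun x => a * μ x) s) ≤ |a| * C := by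
    intro e s hs
    rw [Phi_smul, map_smul_eq_mul, Real.norm_eq_abs]
    exact mul_le_mul_of_nonneg_left hs (abs_nonneg a)
  induction t with
  | leaf e x => exact key _ _ h
  | node e l r hl hr => exact ⟨key _ _ h.1, hl h.2.1, hr h.2.2⟩

theorem Bd.mono {C C' : ℝ} {μ : α → ℝ} {t : HT α E} (h : Bd p ξ C μ t) (hC : C ≤ C') :
    Bd p ξ C' μ t := by
  induction t with
  | leaf e x => exact le_trans h hC
  | node e l r hl hr => exact ⟨h.1.trans hC, hl h.2.1, hr h.2.2⟩

theorem Bd.zero {C : ℝ} (hC : 0 ≤ C) (t : HT α E) : Bd p ξ C (fun _ => 0) t := by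
  induction t with
  | leaf e x => unfold Bd; rw [Phi_zero]; simpa using hC
  | node e l r hl hr => unfold Bd; rw [Phi_zero]; exact ⟨by simpa using hC, hl, hr⟩

theorem Bd.sum {β : Type} {C : ℝ} (J : Finset β) (μ : β → α → ℝ) (t : HT α E)
    (h : ∀ j ∈ J, Bd p ξ C (μ j) t) : Bd p ξ (J.card * C) (fun x => ∑ j ∈ J, μ j x) t := by
  induction J using Finset.induction_on with
  | empty => simpa using Bd.zero (p := p) (ξ := ξ) le_rfl t
  | insert a J ha ih =>
    have h1 := (h a (by simp)).add (ih fun j hj => h j (by simp [hj]))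
    simp only [Finset.sum_insert ha, Finset.card_insert_of_notMem ha]
    refine h1.mono (by push_cast; linarith)

/-- The invariant of the elimination procedure. -/
def Inv (p : E → Seminorm ℝ V) (ξ : α → V) (C : ℝ) (t : HT α E) : Prop :=
  ∃ (E0 : Submodule ℝ V) (x1 : α) (X : Finset α) (g : α → α → ℝ),
    t.leaves.card ≤ (X.card + 1) * 2 ^ (Module.finrank ℝ E0) ∧ x1 ∈ t.leaves ∧ X ⊆ t.leaves ∧ x1 ∉ X ∧
    (∀ q ∈ X, g q x1 = 0 ∧ (∀ q' ∈ X, g q q' = if q' = q then 1 else 0) ∧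
      (∀ x, |g q x| ≤ C) ∧ Bd p ξ C (g q) t) ∧
    (∀ η ∈ E0, p t.edge η ≤ 1 → ∃ c : α → ℝ, c x1 = 0 ∧ (∀ q ∈ X, c q = 0) ∧
      (∀ x, |c x| ≤ C) ∧ Bd p ξ C c t ∧ Phi ξ c t = η)

theorem Inv.leaf {C : ℝ} (hC : 0 ≤ C) (e : E) (x : α) : Inv p ξ C (HT.leaf e x) := by
  refine ⟨⊥, x, ∅, fun _ _ => 0, by simp [leaves], by simp [leaves], by simp, by simp, by simp, ?_⟩
  intro η hη _
  rw [Submodule.mem_bot] at hη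
  refine ⟨fun _ => 0, rfl, by simp, fun _ => by simpa using hC, Bd.zero hC _, ?_⟩
  rw [Phi_zero, hη]

theorem abs_sum_mul_le {β : Type} (J : Finset β) (a b : β → ℝ) (K C : ℝ) (hK : 0 ≤ K) (s : ℕ)
    (hJ : J.card ≤ s) (hC : 0 ≤ C)
    (ha : ∀ j, |a j| ≤ K) (hb : ∀ j ∈ J, |b j| ≤ C) : |∑ j ∈ J, a j * b j| ≤ s * (K * C) := by
  calc |∑ j ∈ J, a j * b j| ≤ ∑ j ∈ J, |a j * b j| := Finset.abs_sum_le_sum_abs _ _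
    _ ≤ ∑ j ∈ J, K * C := Finset.sum_le_sum fun j hj => by
        rw [abs_mul]; exact mul_le_mul (ha j) (hb j hj) (abs_nonneg _) hK
    _ = J.card * (K * C) := by simp
    _ ≤ s * (K * C) := by
        apply mul_le_mul_of_nonneg_right (by exact_mod_cast hJ); positivity

theorem merge_core [FiniteDimensional ℝ V] (s : ℕ) (A C : ℝ) (hA : 0 ≤ A) (hC : 1 ≤ C) :
    ∃ C' : ℝ, C ≤ C' ∧ ∀ (p : E → Seminorm ℝ V) (ξ : α → V) (e : E) (l r : HT α E) (q : Seminorm ℝ V)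
      (E0 : Submodule ℝ V) (x1 : α) (X : Finset α) (g : α → α → ℝ), X.card ≤ s →
      (∀ v, q v ≤ A * p e v) →
      (node e l r).leaves.card ≤ (X.card + 1) * 2 ^ (Module.finrank ℝ E0) →
      x1 ∈ (node e l r).leaves → X ⊆ (node e l r).leaves → x1 ∉ X →
      (∀ z ∈ X, g z x1 = 0 ∧ (∀ z' ∈ X, g z z' = if z' = z then 1 else 0) ∧
        (∀ x, |g z x| ≤ C) ∧ Bd p ξ C (g z) l ∧ Bd p ξ C (g z) r ∧ q (Phi ξ (g z) (node e l r)) ≤ C) →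
      (∀ η ∈ E0, q η ≤ 1 → ∃ c : α → ℝ, c x1 = 0 ∧ (∀ z ∈ X, c z = 0) ∧
        (∀ x, |c x| ≤ C) ∧ Bd p ξ C c l ∧ Bd p ξ C c r ∧ Phi ξ c (node e l r) = η) →
      Inv p ξ C' (node e l r) := by
  obtain ⟨K, hK1, hK⟩ := pivot_lemma (V := V) (α := α) s
  have hs0 : (0:ℝ) ≤ s := Nat.cast_nonneg s
  have hK0 : 0 ≤ K := by linarith
  have hC0 : 0 ≤ C := by linarith
  set B : ℝ := s * (K * C) with hB
  have hB0 : 0 ≤ B := by positivity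
  set S : ℝ := A + A * K + C + B with hS
  have hS0 : 0 ≤ S := by positivity
  refine ⟨1 + K + C + B + (S + 1) * C, by nlinarith, ?_⟩
  set C' := 1 + K + C + B + (S + 1) * C with hC'
  intro p ξ e l r q E0 x1 X g hXs hq hcard hx1 hX hx1X hg hcor
  obtain ⟨J, hJX, E', hE', ha, hb⟩ := hK (p e) (fun x => Phi ξ (g x) (node e l r)) X E0 hXs
  have hJs : J.card ≤ s := (Finset.card_le_card hJX).trans hXs
  have hcorS : ∀ η ∈ E0, q η ≤ S → ∃ c : α → ℝ, c x1 = 0 ∧ (∀ z ∈ X, c z = 0) ∧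
        (∀ x, |c x| ≤ (S + 1) * C) ∧ Bd p ξ ((S + 1) * C) c l ∧ Bd p ξ ((S + 1) * C) c r ∧
        Phi ξ c (node e l r) = η := by
    intro η hη hqη
    have hS1 : 0 < S + 1 := by linarith
    obtain ⟨c, h1, h2, h3, h4, h5, h6⟩ := hcor ((S + 1)⁻¹ • η) (E0.smul_mem _ hη) (by
      rw [map_smul_eq_mul, Real.norm_eq_abs, abs_of_pos (by positivity), inv_mul_le_one₀ hS1]
      linarith)
    have habs : |S + 1| = S + 1 := abs_of_pos hS1
    refine ⟨fun x => (S + 1) * c x, by simp [h1], fun z hz => by simp [h2 z hz], fun x => ?_, ?_, ?_, ?_⟩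
    · rw [abs_mul, habs]; exact mul_le_mul_of_nonneg_left (h3 x) hS1.le
    · have := h4.smul (S + 1); rwa [habs] at this
    · have := h5.smul (S + 1); rwa [habs] at this
    · rw [Phi_smul, h6, smul_smul, mul_inv_cancel₀ hS1.ne', one_smul]
  -- combination of killed functions
  have hcomb : ∀ a : α → ℝ, (∀ x, |a x| ≤ K) →
      (∀ x, |∑ j ∈ J, a j * g j x| ≤ B) ∧ Bd p ξ B (fun x => ∑ j ∈ J, a j * g j x) l ∧
      Bd p ξ B (fun x => ∑ j ∈ J, a j * g j x) r ∧
      Phi ξ (fun x => ∑ j ∈ J, a j * g j x) (node e l r) = ∑ j ∈ J, a j • Phi ξ (g j) (node e l r) ∧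
      q (∑ j ∈ J, a j • Phi ξ (g j) (node e l r)) ≤ B ∧
      (∑ j ∈ J, a j * g j x1 = 0) ∧ ∀ z ∈ X, z ∉ J → ∑ j ∈ J, a j * g j z = 0 := by
    intro a haK
    have hcB : (J.card : ℝ) * (K * C) ≤ B := by
      apply mul_le_mul_of_nonneg_right (by exact_mod_cast hJs); positivity
    have hBd : ∀ t : HT α E, (∀ j ∈ J, Bd p ξ C (g j) t) → Bd p ξ B (fun x => ∑ j ∈ J, a j * g j x) t := by
      intro t ht
      refine (Bd.sum J (fun j x => a j * g j x) t fun j hj => ?_).mono hcB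
      exact ((ht j hj).smul (a j)).mono (mul_le_mul_of_nonneg_right (haK j) hC0)
    refine ⟨fun x => abs_sum_mul_le J a (fun j => g j x) K C hK0 s hJs hC0 haK fun j hj => (hg j (hJX hj)).2.2.1 x,
      hBd l fun j hj => (hg j (hJX hj)).2.2.2.1, hBd r fun j hj => (hg j (hJX hj)).2.2.2.2.1, ?_, ?_, ?_, ?_⟩
    · rw [Phi_sum]; exact Finset.sum_congr rfl fun j _ => Phi_smul _ _ _
    · refine (seminorm_sum_le q _ _).trans (le_trans (Finset.sum_le_sum (g := fun _ => K * C) fun j hj => ?_) ?_)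
      · rw [map_smul_eq_mul, Real.norm_eq_abs]
        exact mul_le_mul (haK j) (hg j (hJX hj)).2.2.2.2.2 (apply_nonneg q _) hK0
      · simpa using hcB
    · exact Finset.sum_eq_zero fun j hj => by rw [(hg j (hJX hj)).1, mul_zero]
    · intro z hz hzJ
      refine Finset.sum_eq_zero fun j hj => ?_
      rw [(hg j (hJX hj)).2.1 z hz, if_neg, mul_zero]
      rintro rfl; exact hzJ hj
  have hXJ : (X \ J).card + J.card = X.card := Finset.card_sdiff_add_card_eq_card hJX
  have hnew : ∀ z : α, ∃ g' : α → ℝ, z ∈ X → z ∉ J → g' x1 = 0 ∧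
      (∀ z' ∈ X \ J, g' z' = if z' = z then 1 else 0) ∧
      (∀ x, |g' x| ≤ C') ∧ Bd p ξ C' g' (node e l r) := by
    intro z
    by_cases hz : z ∈ X ∧ z ∉ J
    swap
    · exact ⟨fun _ => 0, fun h1 h2 => absurd ⟨h1, h2⟩ hz⟩
    obtain ⟨a, haK, e0, he0, hle⟩ := hb z hz.1 hz.2
    obtain ⟨c1, c2, c3, c4, c5, c6, c7⟩ := hcomb a haK
    obtain ⟨g1, g2, g3, g4, g5, g6⟩ := hg z hz.1
    obtain ⟨c, d1, d2, d3, d4, d5, d6⟩ := hcorS e0 he0 (by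
      have e1 : e0 = Phi ξ (g z) (node e l r) - ∑ j ∈ J, a j • Phi ξ (g j) (node e l r) -
          (Phi ξ (g z) (node e l r) - (e0 + ∑ j ∈ J, a j • Phi ξ (g j) (node e l r))) := by abel
      rw [e1]
      have h1 := map_sub_le_add q (Phi ξ (g z) (node e l r) - ∑ j ∈ J, a j • Phi ξ (g j) (node e l r))
          (Phi ξ (g z) (node e l r) - (e0 + ∑ j ∈ J, a j • Phi ξ (g j) (node e l r)))
      have h2 := map_sub_le_add q (Phi ξ (g z) (node e l r)) (∑ j ∈ J, a j • Phi ξ (g j) (node e l r))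
      have h3 := (hq (Phi ξ (g z) (node e l r) - (e0 + ∑ j ∈ J, a j • Phi ξ (g j) (node e l r)))).trans
        (mul_le_mul_of_nonneg_left hle hA)
      linarith)
    let g' : α → ℝ := fun x => g z x + (-1) * (c x + ∑ j ∈ J, a j * g j x)
    have hBd : ∀ t : HT α E, Bd p ξ C (g z) t → Bd p ξ ((S + 1) * C) c t →
        Bd p ξ B (fun x => ∑ j ∈ J, a j * g j x) t → Bd p ξ C' g' t := by
      intro t h1 h2 h3
      refine (h1.add ((h2.add h3).smul (-1))).mono ?_
      simp; linarith
    refine ⟨g', fun _ _ => ⟨?_, ?_, ?_, ?_, hBd l g4 d4 c2, hBd r g5 d5 c3⟩⟩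
    · simp only [g', g1, d1, c6]; simp
    · intro z' hz'
      rw [Finset.mem_sdiff] at hz'
      simp only [g', g2 z' hz'.1, d2 z' hz'.1, c7 z' hz'.1 hz'.2]; simp
    · intro x
      simp only [g']
      have h1 := g3 x
      have h2 := d3 x
      have h3 := c1 x
      rw [abs_le] at *
      constructor <;> linarith [h1.1, h1.2, h2.1, h2.2, h3.1, h3.2]
    · have : Phi ξ g' (node e l r) = Phi ξ (g z) (node e l r) - (e0 + ∑ j ∈ J, a j • Phi ξ (g j) (node e l r)) := by
        simp only [g']
        rw [Phi_add, Phi_smul, Phi_add, d6, c4]; simp [sub_eq_add_neg]; abel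
      rw [this]
      refine hle.trans ?_
      nlinarith
  choose g' hg' using hnew
  refine ⟨E', x1, X \ J, g', ?_, hx1, Finset.sdiff_subset.trans hX, fun h => hx1X (Finset.mem_sdiff.mp h).1, ?_, ?_⟩
  · refine hcard.trans ?_
    rw [hE', pow_add, ← hXJ]
    have h2 : (X \ J).card + J.card + 1 ≤ ((X \ J).card + 1) * 2 ^ J.card := by
      have := @Nat.lt_two_pow_self J.card
      nlinarith
    calc _ ≤ ((X \ J).card + 1) * 2 ^ J.card * 2 ^ Module.finrank ℝ E0 := Nat.mul_le_mul_right _ h2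
      _ = _ := by ring
  · intro z hz
    rw [Finset.mem_sdiff] at hz
    exact hg' z hz.1 hz.2
  · intro η hη hp
    change p e η ≤ 1 at hp
    obtain ⟨a, haK, e0, he0, hve⟩ := ha η hη hp
    obtain ⟨c1, c2, c3, c4, c5, c6, c7⟩ := hcomb a haK
    obtain ⟨c, d1, d2, d3, d4, d5, d6⟩ := hcorS e0 he0 (by
      have e1 : e0 = η - ∑ j ∈ J, a j • Phi ξ (g j) (node e l r) := by rw [hve]; abel
      rw [e1]
      have h2 := map_sub_le_add q η (∑ j ∈ J, a j • Phi ξ (g j) (node e l r))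
      have h3 := (hq η).trans (mul_le_mul_of_nonneg_left hp hA)
      nlinarith)
    have hBd : ∀ t : HT α E, Bd p ξ ((S + 1) * C) c t →
        Bd p ξ B (fun x => ∑ j ∈ J, a j * g j x) t → Bd p ξ C' (fun x => c x + ∑ j ∈ J, a j * g j x) t := by
      intro t h2 h3
      exact (h2.add h3).mono (by linarith)
    have hPhi : Phi ξ (fun x => c x + ∑ j ∈ J, a j * g j x) (node e l r) = η := by
      rw [Phi_add, d6, c4, hve]
    refine ⟨fun x => c x + ∑ j ∈ J, a j * g j x, by simp only [d1, c6, add_zero], ?_, ?_, ⟨?_, hBd l d4 c2, hBd r d5 c3⟩, hPhi⟩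
    · intro z hz
      rw [Finset.mem_sdiff] at hz
      simp only [d2 z hz.1, c7 z hz.1 hz.2, add_zero]
    · intro x
      refine (abs_add_le _ _).trans ?_
      have h2 := d3 x
      have h3 := c1 x
      linarith
    · rw [hPhi]; refine hp.trans ?_
      nlinarith

end HT

end PartA2

section PartA3
namespace HT

variable {α E V : Type} [AddCommGroup V] [Module ℝ V]
variable {p : E → Seminorm ℝ V} {ξ : α → V}

/-- Restriction of a function to the leaves of a tree. -/
def rs (t : HT α E) (f : α → ℝ) : α → ℝ := fun x => if x ∈ t.leaves then f x else 0

theorem rs_mem {t : HT α E} {f : α → ℝ} {x : α} (h : x ∈ t.leaves) : rs t f x = f x := if_pos h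
theorem rs_not_mem {t : HT α E} {f : α → ℝ} {x : α} (h : x ∉ t.leaves) : rs t f x = 0 := if_neg h

theorem rs_abs {t : HT α E} {f : α → ℝ} {C : ℝ} (hC : 0 ≤ C) (h : ∀ x ∈ t.leaves, |f x| ≤ C) (x : α) :
    |rs t f x| ≤ C := by
  unfold rs; split_ifs with hx
  · exact h x hx
  · simpa using hC

theorem Phi_node {e : E} {l r : HT α E} (h : Disjoint l.leaves r.leaves) (μ : α → ℝ) :
    Phi ξ μ (node e l r) = Phi ξ μ l + Phi ξ μ r := by
  simp only [Phi, leaves]; exact Finset.sum_union h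

theorem Bd.rs_self {t : HT α E} {f : α → ℝ} {C : ℝ} (h : Bd p ξ C f t) : Bd p ξ C (rs t f) t :=
  h.congr fun _ hx => (rs_mem hx).symm

theorem Bd.rs_other {t u : HT α E} (f : α → ℝ) {C : ℝ} (hC : 0 ≤ C) (h : Disjoint t.leaves u.leaves) :
    Bd p ξ C (rs t f) u :=
  (Bd.zero hC u).congr fun _ hx => (rs_not_mem fun hx' => Finset.disjoint_left.mp h hx' hx).symm

theorem Phi_rs_self (t : HT α E) (f : α → ℝ) : Phi ξ (rs t f) t = Phi ξ f t :=
  Phi_congr fun _ hx => rs_mem hx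

theorem Phi_rs_other {t u : HT α E} (f : α → ℝ) (h : Disjoint t.leaves u.leaves) :
    Phi ξ (rs t f) u = 0 := by
  rw [← Phi_zero (ξ := ξ) u]
  exact Phi_congr fun _ hx => (rs_not_mem fun hx' => Finset.disjoint_left.mp h hx' hx)

/-- The combined choice of functions at a node. -/
theorem merge_pre {s : ℕ} {A C : ℝ} (hA : 0 ≤ A) (hC : 1 ≤ C) (e : E) (l r : HT α E)
    (hdis : Disjoint l.leaves r.leaves) (q : Seminorm ℝ V)
    (hql : ∀ v, q v ≤ (A + 1) * p l.edge v) (hqr : ∀ v, q v ≤ (A + 1) * p r.edge v)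
    (hsr : r.leaves.card ≤ s)
    (hone : Bd p ξ 1 (fun _ => 1) r)
    (y1 y2 : α) (X1 X2 : Finset α) (g1 g2 : α → α → ℝ)
    (hy1 : y1 ∈ l.leaves) (hy2 : y2 ∈ r.leaves) (hX1 : X1 ⊆ l.leaves) (hX2 : X2 ⊆ r.leaves)
    (hyX2 : y2 ∉ X2)
    (hg1 : ∀ q ∈ X1, g1 q y1 = 0 ∧ (∀ q' ∈ X1, g1 q q' = if q' = q then 1 else 0) ∧
      (∀ x, |g1 q x| ≤ C) ∧ Bd p ξ C (g1 q) l)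
    (hg2 : ∀ q ∈ X2, g2 q y2 = 0 ∧ (∀ q' ∈ X2, g2 q q' = if q' = q then 1 else 0) ∧
      (∀ x, |g2 q x| ≤ C) ∧ Bd p ξ C (g2 q) r) :
    ∃ g : α → α → ℝ, ∀ z ∈ X1 ∪ X2 ∪ {y2}, g z y1 = 0 ∧
      (∀ z' ∈ X1 ∪ X2 ∪ {y2}, g z z' = if z' = z then 1 else 0) ∧
        (∀ x, |g z x| ≤ (A + 1) * (1 + s * C)) ∧ Bd p ξ ((A + 1) * (1 + s * C)) (g z) l ∧
        Bd p ξ ((A + 1) * (1 + s * C)) (g z) r ∧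
        q (Phi ξ (g z) (node e l r)) ≤ (A + 1) * (1 + s * C) := by
  set C1 := (A + 1) * (1 + s * C) with hC1
  have hs0 : (1:ℝ) ≤ s := by
    have : 0 < r.leaves.card := Finset.card_pos.mpr ⟨y2, hy2⟩
    exact_mod_cast (by omega : 1 ≤ s)
  have hlr : ∀ x, x ∈ l.leaves → x ∉ r.leaves := fun x h1 h2 => Finset.disjoint_left.mp hdis h1 h2
  have hC2 : C ≤ 1 + s * C := by nlinarith
  have hC3 : 1 + s * C ≤ C1 := by rw [hC1]; nlinarith
  have hC10 : 0 ≤ C1 := by linarith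
  have hC4 : (A + 1) * C ≤ C1 := mul_le_mul_of_nonneg_left hC2 (by linarith)
  have hqL : ∀ f : α → ℝ, Bd p ξ (1 + s * C) f l → q (Phi ξ (rs l f) (node e l r)) ≤ C1 := by
    intro f hf
    rw [Phi_node hdis, Phi_rs_self, Phi_rs_other f hdis, add_zero]
    exact (hql _).trans (mul_le_mul_of_nonneg_left hf.edge (by linarith))
  have hqR : ∀ f : α → ℝ, Bd p ξ (1 + s * C) f r → q (Phi ξ (rs r f) (node e l r)) ≤ C1 := by
    intro f hf
    rw [Phi_node hdis, Phi_rs_self, Phi_rs_other f hdis.symm, zero_add]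
    exact (hqr _).trans (mul_le_mul_of_nonneg_left hf.edge (by linarith))
  suffices h : ∀ z, ∃ g : α → ℝ, z ∈ X1 ∪ X2 ∪ {y2} → g y1 = 0 ∧
      (∀ z' ∈ X1 ∪ X2 ∪ {y2}, g z' = if z' = z then 1 else 0) ∧
        (∀ x, |g x| ≤ C1) ∧ Bd p ξ C1 g l ∧ Bd p ξ C1 g r ∧ q (Phi ξ g (node e l r)) ≤ C1 by
    choose g hg using h
    exact ⟨g, hg⟩
  intro z
  by_cases hz1 : z ∈ X1
  · obtain ⟨a1, a2, a3, a4⟩ := hg1 z hz1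
    refine ⟨rs l (g1 z), fun _ => ⟨?_, ?_, rs_abs hC10 fun x _ => (a3 x).trans (by linarith),
      (a4.mono (by linarith)).rs_self, Bd.rs_other _ hC10 hdis, hqL _ (a4.mono hC2)⟩⟩
    · rw [rs_mem hy1, a1]
    · intro z' hz'
      by_cases hz'1 : z' ∈ X1
      · rw [rs_mem (hX1 hz'1), a2 z' hz'1]
      · have hz'r : z' ∈ r.leaves := by
          simp only [Finset.mem_union, Finset.mem_singleton] at hz'
          rcases hz' with (h | h) | h
          · exact absurd h hz'1
          · exact hX2 h
          · rw [h]; exact hy2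
        rw [rs_not_mem fun h => hlr _ h hz'r, if_neg]
        rintro rfl; exact hz'1 hz1
  by_cases hz2 : z ∈ X2
  · obtain ⟨a1, a2, a3, a4⟩ := hg2 z hz2
    refine ⟨rs r (g2 z), fun _ => ⟨?_, ?_, rs_abs hC10 fun x _ => (a3 x).trans (by linarith),
      Bd.rs_other _ hC10 hdis.symm, (a4.mono (by linarith)).rs_self, hqR _ (a4.mono hC2)⟩⟩
    · rw [rs_not_mem (hlr _ hy1)]
    · intro z' hz'
      simp only [Finset.mem_union, Finset.mem_singleton] at hz'
      rcases hz' with (h | h) | h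
      · rw [rs_not_mem (hlr _ (hX1 h)), if_neg]
        rintro rfl; exact hz1 h
      · rw [rs_mem (hX2 h), a2 z' h]
      · rw [h, rs_mem hy2, a1, if_neg]
        rintro rfl; exact hyX2 hz2
  refine ⟨rs r (fun x => 1 + (-1) * ∑ j ∈ X2, g2 j x), fun hz => ?_⟩
  have hzy : z = y2 := by
    simp only [Finset.mem_union, Finset.mem_singleton] at hz
    tauto
  have hcs : (X2.card : ℝ) ≤ s := by exact_mod_cast (Finset.card_le_card hX2).trans hsr
  have hB : Bd p ξ (1 + s * C) (fun x => 1 + (-1) * ∑ j ∈ X2, g2 j x) r := by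
    refine (hone.add ((Bd.sum X2 g2 r fun j hj => (hg2 j hj).2.2.2).smul (-1))).mono ?_
    simp
    exact mul_le_mul_of_nonneg_right hcs (by linarith)
  refine ⟨?_, ?_, rs_abs hC10 fun x _ => ?_, Bd.rs_other _ hC10 hdis.symm, (hB.mono hC3).rs_self, hqR _ hB⟩
  · rw [rs_not_mem (hlr _ hy1)]
  · intro z' hz'
    simp only [Finset.mem_union, Finset.mem_singleton] at hz'
    rcases hz' with (h | h) | h
    · rw [rs_not_mem (hlr _ (hX1 h)), if_neg]
      rintro rfl; exact hz1 h
    · have hs : ∑ j ∈ X2, g2 j z' = 1 := by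
        rw [Finset.sum_congr rfl fun j hj => (hg2 j hj).2.1 z' h]
        simp [h]
      rw [rs_mem (hX2 h), hs, if_neg]
      · norm_num
      · rintro rfl; exact hz2 h
    · have hs : ∑ j ∈ X2, g2 j y2 = 0 := Finset.sum_eq_zero fun j hj => (hg2 j hj).1
      rw [h, rs_mem hy2, hs, hzy]; simp
  · refine (abs_add_le _ _).trans (le_trans ?_ hC3)
    rw [abs_mul, abs_neg, abs_one, one_mul]
    refine add_le_add le_rfl ((Finset.abs_sum_le_sum_abs _ _).trans ?_)
    refine (Finset.sum_le_sum fun j hj => (hg2 j hj).2.2.1 x).trans ?_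
    simp
    exact mul_le_mul_of_nonneg_right hcs (by linarith)

theorem inv_all [FiniteDimensional ℝ V] (A : ℝ) (hA : 0 ≤ A) (s : ℕ) :
    ∃ C : ℝ, 1 ≤ C ∧ ∀ (p : E → Seminorm ℝ V) (ξ : α → V) (t : HT α E), t.sz ≤ s → Good p A t →
      Bd p ξ 1 (fun _ => 1) t → Inv p ξ C t := by
  induction s with
  | zero => exact ⟨1, le_rfl, fun p ξ t ht => absurd t.sz_pos (by omega)⟩
  | succ s ih =>
    obtain ⟨C, hC, ih⟩ := ih
    have hs0 : (0:ℝ) ≤ s := Nat.cast_nonneg s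
    have hC1 : 1 ≤ (A + 1) * (1 + s * C) := by nlinarith [mul_nonneg hs0 (by linarith : 0 ≤ C), mul_nonneg hA (mul_nonneg hs0 (by linarith : 0 ≤ C))]
    obtain ⟨C', hC', hmerge⟩ := merge_core (V := V) (α := α) (E := E) (s + 1) A _ hA hC1
    refine ⟨C', hC1.trans hC', ?_⟩
    intro p ξ t hts hgood hbd
    cases t with
    | leaf e x => exact Inv.leaf (by linarith) e x
    | node e l r =>
      obtain ⟨hdis, ⟨hle, hre, hlr, hrl⟩, hgl, hgr⟩ := hgood
      obtain ⟨-, hbl, hbr⟩ := hbd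
      have hl1 := l.sz_pos
      have hr1 := r.sz_pos
      simp only [sz] at hts
      have hcl := l.card_leaves_le
      have hcr := r.card_leaves_le
      have hCs : C ≤ (A + 1) * (1 + s * C) := by
        have : (1:ℝ) ≤ s := by exact_mod_cast (by omega : 1 ≤ s)
        have : C ≤ 1 + s * C := by nlinarith
        nlinarith
      have hCs0 : 0 ≤ (A + 1) * (1 + s * C) := by linarith
      obtain ⟨E1, y1, X1, g1, a1, a2, a3, a4, a5, a6⟩ := ih p ξ l (by omega) hgl hbl
      obtain ⟨E2, y2, X2, g2, b1, b2, b3, b4, b5, b6⟩ := ih p ξ r (by omega) hgr hbr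
      have hnot : ∀ x, x ∈ l.leaves → x ∉ r.leaves := fun x h1 h2 => Finset.disjoint_left.mp hdis h1 h2
      have hXcard : (X1 ∪ X2 ∪ {y2}).card = X1.card + X2.card + 1 := by
        rw [Finset.card_union_of_disjoint, Finset.card_union_of_disjoint, Finset.card_singleton]
        · exact Finset.disjoint_of_subset_left a3 (Finset.disjoint_of_subset_right b3 hdis)
        · rw [Finset.disjoint_singleton_right, Finset.mem_union]
          rintro (h | h)
          · exact hnot _ (a3 h) b2
          · exact b4 h
      have hXsub : X1 ∪ X2 ∪ {y2} ⊆ (node e l r).leaves := by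
        intro x hx
        simp only [Finset.mem_union, Finset.mem_singleton] at hx
        simp only [leaves, Finset.mem_union]
        rcases hx with (h | h) | h
        · exact Or.inl (a3 h)
        · exact Or.inr (b3 h)
        · rw [h]; exact Or.inr b2
      have hcard : (node e l r).leaves.card ≤ l.leaves.card + r.leaves.card := Finset.card_union_le _ _
      have hXs : (X1 ∪ X2 ∪ {y2}).card ≤ s + 1 := (Finset.card_le_card hXsub).trans (by omega)
      have hy1X : y1 ∉ X1 ∪ X2 ∪ {y2} := by
        simp only [Finset.mem_union, Finset.mem_singleton]
        rintro ((h | h) | h)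
        · exact a4 h
        · exact hnot _ a2 (b3 h)
        · exact hnot _ a2 (h ▸ b2)
      have hy1n : y1 ∈ (node e l r).leaves := by simp [leaves, a2]
      by_cases hrk : Module.finrank ℝ E2 ≤ Module.finrank ℝ E1
      · obtain ⟨g, hg⟩ := merge_pre (p := p) (ξ := ξ) hA hC e l r hdis (p l.edge)
          (fun v => by nlinarith [apply_nonneg (p l.edge) v])
          (fun v => by nlinarith [apply_nonneg (p r.edge) v, hlr v]) (by omega : _ ≤ s) hbr y1 y2 X1 X2 g1 g2
          a2 b2 a3 b3 b4 a5 b5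
        refine hmerge p ξ e l r (p l.edge) E1 y1 (X1 ∪ X2 ∪ {y2}) g hXs hle ?_ hy1n hXsub hy1X hg ?_
        · rw [hXcard]
          have h2 := Nat.pow_le_pow_right (n := 2) (by norm_num) hrk
          have h3 := Nat.mul_le_mul_left (X2.card + 1) h2
          nlinarith
        · intro η hη hq
          obtain ⟨c, c1, c2, c3, c4, c5⟩ := a6 η hη hq
          refine ⟨rs l c, by rw [rs_mem a2, c1], ?_, rs_abs hCs0 fun x _ => (c3 x).trans hCs,
            (c4.mono hCs).rs_self, Bd.rs_other _ hCs0 hdis, ?_⟩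
          · intro z hz
            simp only [Finset.mem_union, Finset.mem_singleton] at hz
            rcases hz with (h | h) | h
            · rw [rs_mem (a3 h), c2 z h]
            · exact rs_not_mem fun h' => hnot _ h' (b3 h)
            · rw [h]; exact rs_not_mem fun h' => hnot _ h' b2
          · rw [Phi_node hdis, Phi_rs_self, Phi_rs_other c hdis, add_zero, c5]
      · obtain ⟨g, hg⟩ := merge_pre (p := p) (ξ := ξ) hA hC e l r hdis (p r.edge)
          (fun v => by nlinarith [apply_nonneg (p l.edge) v, hrl v])
          (fun v => by nlinarith [apply_nonneg (p r.edge) v]) (by omega : _ ≤ s) hbr y1 y2 X1 X2 g1 g2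
          a2 b2 a3 b3 b4 a5 b5
        refine hmerge p ξ e l r (p r.edge) E2 y1 (X1 ∪ X2 ∪ {y2}) g hXs hre ?_ hy1n hXsub hy1X hg ?_
        · rw [hXcard]
          have h2 := Nat.pow_le_pow_right (n := 2) (by norm_num) (le_of_not_ge hrk)
          have h3 := Nat.mul_le_mul_left (X1.card + 1) h2
          nlinarith
        · intro η hη hq
          obtain ⟨c, c1, c2, c3, c4, c5⟩ := b6 η hη hq
          refine ⟨rs r c, rs_not_mem (hnot _ a2), ?_, rs_abs hCs0 fun x _ => (c3 x).trans hCs,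
            Bd.rs_other _ hCs0 hdis.symm, (c4.mono hCs).rs_self, ?_⟩
          · intro z hz
            simp only [Finset.mem_union, Finset.mem_singleton] at hz
            rcases hz with (h | h) | h
            · exact rs_not_mem fun h' => hnot _ (a3 h) h'
            · rw [rs_mem (b3 h), c2 z h]
            · rw [h, rs_mem b2, c1]
          · rw [Phi_node hdis, Phi_rs_self, Phi_rs_other c hdis.symm, zero_add, c5]

/-- The splitting of a flow into two bounded flows, each missing a leaf. -/
theorem lin_split [FiniteDimensional ℝ V] (A : ℝ) (hA : 0 ≤ A) (s : ℕ) :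
    ∃ C : ℝ, 1 ≤ C ∧ ∀ (p : E → Seminorm ℝ V) (ξ : α → V) (t : HT α E), t.sz ≤ s → Good p A t →
      Bd p ξ 1 (fun _ => 1) t → 2 ^ (Module.finrank ℝ V) < t.leaves.card →
      ∃ lam : α → ℝ, (∀ x ∈ t.leaves, 0 ≤ lam x ∧ lam x ≤ 1) ∧ (∃ x ∈ t.leaves, lam x = 0) ∧
        (∃ x ∈ t.leaves, lam x = 1) ∧ Bd p ξ C lam t ∧ Bd p ξ C (fun x => 1 - lam x) t := by
  obtain ⟨C, hC, h⟩ := inv_all (V := V) (α := α) (E := E) A hA s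
  refine ⟨2 * C + 1, by linarith, ?_⟩
  intro p ξ t hts hgood hbd hcard
  obtain ⟨E1, y1, X1, g1, a1, a2, a3, a4, a5, -⟩ := h p ξ t hts hgood hbd
  have hX : X1.Nonempty := by
    rw [Finset.nonempty_iff_ne_empty]
    rintro rfl
    have := Nat.pow_le_pow_right (n := 2) (by norm_num) (Submodule.finrank_le E1)
    simp at a1
    omega
  obtain ⟨q, hq⟩ := hX
  obtain ⟨b1, b2, b3, b4⟩ := a5 q hq
  have b2' : g1 q q = 1 := by rw [b2 q hq]; simp
  set f := g1 q
  obtain ⟨u, hu, humin⟩ := t.leaves.exists_min_image f ⟨y1, a2⟩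
  obtain ⟨w, hw, hwmax⟩ := t.leaves.exists_max_image f ⟨y1, a2⟩
  have h1 : f u ≤ 0 := b1 ▸ humin y1 a2
  have h2 : 1 ≤ f w := b2' ▸ hwmax q (a3 hq)
  have h3 := b3 u
  rw [abs_le] at h3
  have hd : 1 ≤ f w - f u := by linarith
  set d := f w - f u with hdd
  have hd0 : 0 < d := by linarith
  have hbd1 : Bd p ξ (2 * C) (fun x => d⁻¹ * (f x + (-f u) * 1)) t := by
    refine ((b4.add (hbd.smul (-f u))).smul d⁻¹).mono ?_
    have h4 : |d⁻¹| ≤ 1 := by rw [abs_of_pos (by positivity)]; exact inv_le_one_of_one_le₀ hd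
    have h5 : |-f u| ≤ C := by rw [abs_neg]; exact b3 u
    have h6 := abs_nonneg (-f u)
    have h7 := abs_nonneg d⁻¹
    nlinarith
  refine ⟨_, ?_, ⟨u, hu, by simp⟩, ⟨w, hw, ?_⟩, hbd1.mono (by linarith), ?_⟩
  · intro x hx
    have := humin x hx
    have := hwmax x hx
    constructor
    · apply mul_nonneg (by positivity); linarith
    · rw [inv_mul_le_one₀ hd0]; linarith
  · show d⁻¹ * (f w + -f u * 1) = 1
    rw [show f w + -f u * 1 = d by rw [hdd]; ring, inv_mul_cancel₀ hd0.ne']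
  · refine ((hbd.add (hbd1.smul (-1))).mono ?_).congr ?_
    · simp; linarith
    · intro x _; ring

end HT

end PartA3

section PartA4
namespace HT

variable {α E W ι : Type} [AddCommGroup W] [Module ℝ W] [Fintype ι]

/-- Dual seminorm attached to a finite family of vectors. -/
def pn (b : E → ι → W) (e : E) : Seminorm ℝ (Module.Dual ℝ W) :=
  Seminorm.of (fun φ => ∑ i, |φ (b e i)|)
    (fun φ ψ => by
      rw [← Finset.sum_add_distrib]
      exact Finset.sum_le_sum fun i _ => by simpa using abs_add_le (φ (b e i)) (ψ (b e i)))
    (fun a φ => by simp [abs_mul, Finset.mul_sum])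

theorem pn_apply (b : E → ι → W) (e : E) (φ : Module.Dual ℝ W) : pn b e φ = ∑ i, |φ (b e i)| := rfl

/-- Representability of a family of vectors along a tree with coefficients in `B`. -/
def Rep (b : E → ι → W) (B : Set (ι → ℝ)) : HT α E → (α → W) → Prop
  | leaf e x, P => ∃ c ∈ B, P x = ∑ i, c i • b e i
  | node e l r, P => ∃ c ∈ B, Rep b B l (fun x => P x - ∑ i, c i • b e i) ∧
      Rep b B r (fun x => P x - ∑ i, c i • b e i)

/-- Closed box. -/
def cbox (ι : Type) (M : ℝ) : Set (ι → ℝ) := {c | ∀ i, |c i| ≤ M}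
/-- Open box. -/
def obox (ι : Type) (M : ℝ) : Set (ι → ℝ) := {c | ∀ i, |c i| < M}

/-- The leaf families are spanning. -/
def Spn (b : E → ι → W) : HT α E → Prop
  | leaf e _ => Submodule.span ℝ (Set.range (b e)) = ⊤
  | node _ l r => Spn b l ∧ Spn b r

variable {b : E → ι → W}

theorem Rep.mono {B B' : Set (ι → ℝ)} (h : B ⊆ B') {t : HT α E} {P : α → W} (hP : Rep b B t P) :
    Rep b B' t P := by
  induction t generalizing P with
  | leaf e x => obtain ⟨c, hc, h1⟩ := hP; exact ⟨c, h hc, h1⟩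
  | node e l r hl hr => obtain ⟨c, hc, h1, h2⟩ := hP; exact ⟨c, h hc, hl h1, hr h2⟩

theorem Rep.congr {B : Set (ι → ℝ)} {t : HT α E} {P P' : α → W} (hP : Rep b B t P)
    (h : ∀ x ∈ t.leaves, P x = P' x) : Rep b B t P' := by
  induction t generalizing P P' with
  | leaf e x => obtain ⟨c, hc, h1⟩ := hP; exact ⟨c, hc, by rw [← h x (by simp [leaves]), h1]⟩
  | node e l r hl hr =>
    obtain ⟨c, hc, h1, h2⟩ := hP
    exact ⟨c, hc, hl h1 fun x hx => by rw [h x (by simp [leaves, hx])],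
      hr h2 fun x hx => by rw [h x (by simp [leaves, hx])]⟩

theorem Rep.zero {B : Set (ι → ℝ)} (h0 : (fun _ => 0) ∈ B) (t : HT α E) : Rep b B t (fun _ => 0) := by
  induction t with
  | leaf e x => exact ⟨_, h0, by simp⟩
  | node e l r hl hr => exact ⟨_, h0, by simpa using hl, by simpa using hr⟩

theorem rep_convex {B : Set (ι → ℝ)} (hB : Convex ℝ B) (t : HT α E) : Convex ℝ {P | Rep b B t P} := by
  intro P hP Q hQ u v hu hv huv
  simp only [Set.mem_ofPred_eq] at *
  induction t generalizing P Q with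
  | leaf e x =>
    obtain ⟨c, hc, h1⟩ := hP
    obtain ⟨d, hd, h2⟩ := hQ
    refine ⟨_, hB hc hd hu hv huv, ?_⟩
    simp only [Pi.add_apply, Pi.smul_apply, h1, h2, Finset.smul_sum, ← Finset.sum_add_distrib, smul_eq_mul,
      add_smul, mul_smul]
  | node e l r hl hr =>
    obtain ⟨c, hc, h1, h3⟩ := hP
    obtain ⟨d, hd, h2, h4⟩ := hQ
    have key : (fun x => (u • P + v • Q) x - ∑ i, (u • c + v • d) i • b e i) =
        u • (fun x => P x - ∑ i, c i • b e i) + v • (fun x => Q x - ∑ i, d i • b e i) := by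
      funext x
      simp only [Pi.add_apply, Pi.smul_apply, smul_sub, Finset.smul_sum, Finset.sum_add_distrib, smul_eq_mul,
        add_smul, mul_smul]
      abel
    refine ⟨_, hB hc hd hu hv huv, ?_, ?_⟩
    · rw [key]; exact hl h1 h2
    · rw [key]; exact hr h3 h4

theorem rep_open [TopologicalSpace W] [IsTopologicalAddGroup W] [ContinuousSMul ℝ W] [IsModuleTopology ℝ W]
    {B : Set (ι → ℝ)} (hB : IsOpen B) (t : HT α E) (ht : Spn b t) : IsOpen {P | Rep b B t P} := by
  induction t with
  | leaf e x =>
    let L : (ι → ℝ) →ₗ[ℝ] W := Fintype.linearCombination ℝ (b e)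
    have hsurj : Function.Surjective L := by
      rw [← LinearMap.range_eq_top, Fintype.range_linearCombination]; exact ht
    have hopen : IsOpenMap L := IsModuleTopology.isOpenMap_of_surjective hsurj
    have : {P : α → W | Rep b B (leaf e x) P} = (fun P : α → W => P x) ⁻¹' (L '' B) := by
      ext P
      simp only [Set.mem_ofPred_eq, Set.mem_preimage, Set.mem_image, Rep, L, Fintype.linearCombination_apply]
      constructor
      · rintro ⟨c, hc, h⟩; exact ⟨c, hc, h.symm⟩
      · rintro ⟨c, hc, h⟩; exact ⟨c, hc, h.symm⟩
    rw [this]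
    exact (hopen B hB).preimage (continuous_apply x)
  | node e l r hl hr =>
    have : {P : α → W | Rep b B (node e l r) P} = ⋃ c ∈ B, (fun (P : α → W) x => P x - ∑ i, c i • b e i) ⁻¹'
        ({P | Rep b B l P} ∩ {P | Rep b B r P}) := by
      ext P
      simp [Rep]
      tauto
    rw [this]
    refine isOpen_biUnion fun c _ => ((hl ht.1).inter (hr ht.2)).preimage ?_
    fun_prop

/-- Pairing of a family with functionals. -/
theorem pair_bound {ξ : α → Module.Dual ℝ W} {lam : α → ℝ} {A C M : ℝ} (hM : 0 ≤ M)
    {t : HT α E} (hg : Good (pn b) A t) (hb : Bd (pn b) ξ C lam t) {P : α → W} (hP : Rep b (cbox ι M) t P) :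
    |∑ x ∈ t.leaves, lam x * ξ x (P x)| ≤ (2 * t.sz - 1) * (C * M) := by
  have key : ∀ (e : E) (s : HT α E) (c : ι → ℝ), c ∈ cbox ι M → pn b e (Phi ξ lam s) ≤ C →
      |∑ x ∈ s.leaves, lam x * ξ x (∑ i, c i • b e i)| ≤ C * M := by
    intro e s c hc hs
    have : ∑ x ∈ s.leaves, lam x * ξ x (∑ i, c i • b e i) = ∑ i, c i * (Phi ξ lam s (b e i)) := by
      simp only [Phi, LinearMap.sum_apply, LinearMap.smul_apply, map_sum, map_smul, smul_eq_mul, Finset.mul_sum]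
      rw [Finset.sum_comm]
      exact Finset.sum_congr rfl fun i _ => Finset.sum_congr rfl fun x _ => by ring
    rw [this]
    calc _ ≤ ∑ i, |c i * (Phi ξ lam s (b e i))| := Finset.abs_sum_le_sum_abs _ _
      _ ≤ ∑ i, M * |Phi ξ lam s (b e i)| := Finset.sum_le_sum fun i _ => by
          rw [abs_mul]; exact mul_le_mul_of_nonneg_right (hc i) (abs_nonneg _)
      _ = M * pn b e (Phi ξ lam s) := by rw [pn_apply, Finset.mul_sum]
      _ ≤ C * M := by rw [mul_comm C]; exact mul_le_mul_of_nonneg_left hs hM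
  induction t generalizing P with
  | leaf e x =>
    obtain ⟨c, hc, h1⟩ := hP
    have := key e (leaf e x) c hc hb
    simp only [leaves, Finset.sum_singleton, sz] at this ⊢
    rw [h1]; refine this.trans (le_of_eq ?_); push_cast; ring
  | node e l r hl hr =>
    obtain ⟨c, hc, h1, h2⟩ := hP
    have k1 := key e (node e l r) c hc hb.1
    have k2 := hl hg.2.2.1 hb.2.1 h1
    have k3 := hr hg.2.2.2 hb.2.2 h2
    have : ∑ x ∈ (node e l r).leaves, lam x * ξ x (P x) =
        ∑ x ∈ (node e l r).leaves, lam x * ξ x (∑ i, c i • b e i) +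
        (∑ x ∈ l.leaves, lam x * ξ x (P x - ∑ i, c i • b e i) +
        ∑ x ∈ r.leaves, lam x * ξ x (P x - ∑ i, c i • b e i)) := by
      rw [← Finset.sum_union hg.1]
      change _ = _ + ∑ x ∈ (node e l r).leaves, _
      rw [← Finset.sum_add_distrib]
      exact Finset.sum_congr rfl fun x _ => by rw [map_sub]; ring
    rw [this]
    simp only [sz]; push_cast
    have := abs_add_le (∑ x ∈ (node e l r).leaves, lam x * ξ x (∑ i, c i • b e i)) (∑ x ∈ l.leaves, lam x * ξ x (P x - ∑ i, c i • b e i) +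
        ∑ x ∈ r.leaves, lam x * ξ x (P x - ∑ i, c i • b e i))
    have := abs_add_le (∑ x ∈ l.leaves, lam x * ξ x (P x - ∑ i, c i • b e i))
      (∑ x ∈ r.leaves, lam x * ξ x (P x - ∑ i, c i • b e i))
    linarith

theorem bd_of_test {ξ : α → Module.Dual ℝ W} {A γ : ℝ} (hγ : 0 < γ)
    {t : HT α E} (hg : Good (pn b) A t)
    (h : ∀ P, Rep b (obox ι γ) t P → ∑ x ∈ t.leaves, ξ x (P x) ≤ γ / 2) :
    Bd (pn b) ξ 1 (fun _ => 1) t := by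
  have h0 : (fun _ => 0) ∈ obox ι γ := fun i => by simpa using hγ
  have key : ∀ (e : E) (s : HT α E), (∀ c ∈ obox ι γ, ∑ x ∈ s.leaves, ξ x (∑ i, c i • b e i) ≤ γ / 2) →
      pn b e (Phi ξ (fun _ => 1) s) ≤ 1 := by
    intro e s hs
    have h1 := hs (fun i => γ / 2 * (SignType.sign (Phi ξ (fun _ => 1) s (b e i)) : ℝ)) (by
      intro i
      rw [abs_mul, abs_of_pos (by positivity)]
      have : |(SignType.sign (Phi ξ (fun _ => 1) s (b e i)) : ℝ)| ≤ 1 := by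
        rcases lt_trichotomy (Phi ξ (fun _ => 1) s (b e i)) 0 with h | h | h
        · simp [h]
        · simp [h]
        · simp [h]
      nlinarith)
    have h2 : ∑ x ∈ s.leaves, ξ x (∑ i, (γ / 2 * (SignType.sign (Phi ξ (fun _ => 1) s (b e i)) : ℝ)) • b e i) =
        γ / 2 * pn b e (Phi ξ (fun _ => 1) s) := by
      rw [pn_apply, Finset.mul_sum]
      have : ∀ i, |Phi ξ (fun _ => 1) s (b e i)| =
        (SignType.sign (Phi ξ (fun _ => 1) s (b e i)) : ℝ) * ∑ x ∈ s.leaves, ξ x (b e i) := by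
        intro i
        rw [← sign_mul_self]
        congr 1
        simp [Phi]
      simp only [this, map_sum, map_smul, smul_eq_mul, Finset.mul_sum]
      rw [Finset.sum_comm]
      exact Finset.sum_congr rfl fun i _ => Finset.sum_congr rfl fun x _ => by ring
    rw [h2] at h1
    nlinarith
  induction t with
  | leaf e x => exact key e _ fun c hc => h (fun _ => ∑ i, c i • b e i) ⟨c, hc, rfl⟩
  | node e l r hl hr =>
    have hlr : ∀ x, x ∈ l.leaves → x ∉ r.leaves := fun x h1 h2 => Finset.disjoint_left.mp hg.1 h1 h2
    refine ⟨key e _ fun c hc => h (fun _ => ∑ i, c i • b e i) ⟨c, hc, ?_, ?_⟩, hl hg.2.2.1 fun P hP => ?_,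
      hr hg.2.2.2 fun P hP => ?_⟩
    · simpa using Rep.zero h0 l
    · simpa using Rep.zero h0 r
    · have := h (fun x => if x ∈ l.leaves then P x else 0) ⟨_, h0, ?_, ?_⟩
      · rw [leaves, Finset.sum_union hg.1] at this
        rw [Finset.sum_congr rfl fun x hx => by rw [if_pos hx]] at this
        rw [Finset.sum_eq_zero (s := r.leaves) fun x hx => by
          rw [if_neg fun h => hlr x h hx, map_zero]] at this
        linarith
      · exact hP.congr fun x hx => by simp [hx]
      · exact (Rep.zero h0 r).congr fun x hx => by simp [show x ∉ l.leaves from fun h => hlr x h hx]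
    · have := h (fun x => if x ∈ r.leaves then P x else 0) ⟨_, h0, ?_, ?_⟩
      · rw [leaves, Finset.sum_union hg.1] at this
        rw [Finset.sum_congr (s₁ := r.leaves) rfl fun x hx => by rw [if_pos hx]] at this
        rw [Finset.sum_eq_zero (s := l.leaves) fun x hx => by
          rw [if_neg (hlr x hx), map_zero]] at this
        linarith
      · exact (Rep.zero h0 l).congr fun x hx => by simp [hlr x hx]
      · exact hP.congr fun x hx => by simp [hx]

theorem isOpen_obox (γ : ℝ) : IsOpen (obox ι γ) := by
  have : obox ι γ = Set.univ.pi fun _ => {x : ℝ | |x| < γ} := by ext c; simp [obox]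
  rw [this]
  exact isOpen_set_pi Set.finite_univ fun i _ => isOpen_lt continuous_abs continuous_const

theorem convex_obox (γ : ℝ) : Convex ℝ (obox ι γ) := by
  have : obox ι γ = Set.univ.pi fun _ => Set.Ioo (-γ) γ := by ext c; simp [obox, abs_lt]
  rw [this]
  exact convex_pi fun i _ => convex_Ioo _ _

theorem sel_aux [FiniteDimensional ℝ W] [TopologicalSpace W] [IsTopologicalAddGroup W] [ContinuousSMul ℝ W]
    [IsModuleTopology ℝ W] (A : ℝ) (hA : 0 ≤ A) (s : ℕ) :
    ∃ C : ℝ, 1 ≤ C ∧ ∀ (b : E → ι → W) (t : HT α E), t.sz ≤ s → Good (pn b) A t → Spn b t →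
      2 ^ (Module.finrank ℝ W) < t.leaves.card → ∀ G : α → Set W, (∀ x ∈ t.leaves, Convex ℝ (G x)) →
      ∀ M : ℝ, 0 < M → (∀ x ∈ t.leaves, ∃ P, Rep b (cbox ι M) t P ∧ ∀ y ∈ t.leaves, y ≠ x → P y ∈ G y) →
      ∃ P, Rep b (cbox ι (C * M)) t P ∧ ∀ y ∈ t.leaves, P y ∈ G y := by
  obtain ⟨C0, hC0, hsplit⟩ := lin_split (V := Module.Dual ℝ W) (α := α) (E := E) A hA s
  have hs0 : (0:ℝ) ≤ s := Nat.cast_nonneg s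
  refine ⟨8 * s * C0 + 1, by nlinarith [mul_nonneg hs0 (by linarith : 0 ≤ C0)], ?_⟩
  intro b t hts hgood hspn hcard G hG M hM hloc
  set γ := (8 * s * C0 + 1) * M with hγd
  have hγ : 0 < γ := by rw [hγd]; have := mul_nonneg hs0 (by linarith : 0 ≤ C0); apply mul_pos _ hM; nlinarith
  by_contra hcon
  push Not at hcon
  let K : Set (α → W) := {P | Rep b (obox ι γ) t P}
  let Z : Set (α → W) := {P | ∀ y ∈ t.leaves, P y ∈ G y}
  have hdisj : Disjoint K Z := by
    rw [Set.disjoint_left]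
    intro P hP hPZ
    obtain ⟨y, hy, hyG⟩ := hcon P (Rep.mono (fun c hc i => (hc i).le) hP)
    exact hyG (hPZ y hy)
  have hZ : Convex ℝ Z := by
    intro P hP Q hQ u v hu hv huv y hy
    exact hG y hy (hP y hy) (hQ y hy) hu hv huv
  obtain ⟨f, u, hfK, hfZ⟩ := geometric_hahn_banach_open (rep_convex (convex_obox γ) t)
    (rep_open (isOpen_obox γ) t hspn) hZ hdisj
  have h0 : (fun _ => 0) ∈ obox ι γ := fun i => by simpa using hγ
  have hu : 0 < u := by
    have := hfK _ (Rep.zero h0 t)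
    rwa [show (fun _ => 0 : α → W) = 0 from rfl, map_zero] at this
  let ξ : α → Module.Dual ℝ W := fun x => (γ / (2 * u)) • (f.toLinearMap ∘ₗ LinearMap.single ℝ (fun _ => W) x)
  have hξ : ∀ P : α → W, ∑ x ∈ t.leaves, ξ x (P x) = γ / (2 * u) * f (fun x => if x ∈ t.leaves then P x else 0) := by
    intro P
    have : (fun x => if x ∈ t.leaves then P x else 0) = ∑ x ∈ t.leaves, Pi.single x (P x) := by
      funext y
      rw [Finset.sum_apply]
      by_cases hy : y ∈ t.leaves
      · rw [if_pos hy, Finset.sum_eq_single y]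
        · simp
        · intro z _ hz; exact Pi.single_eq_of_ne hz.symm _
        · intro h; exact absurd hy h
      · rw [if_neg hy]; symm
        refine Finset.sum_eq_zero fun z hz => Pi.single_eq_of_ne ?_ _
        rintro rfl; exact hy hz
    rw [this, map_sum, Finset.mul_sum]
    rfl
  have hgu : γ / (2 * u) * u = γ / 2 := by field_simp
  have hgu0 : 0 < γ / (2 * u) := by positivity
  have hbd : Bd (pn b) ξ 1 (fun _ => 1) t := by
    refine bd_of_test hγ hgood fun P hP => ?_
    rw [hξ, ← hgu]
    refine mul_le_mul_of_nonneg_left (hfK _ ?_).le hgu0.le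
    exact hP.congr fun x hx => by simp [hx]
  obtain ⟨lam, hlam, ⟨x1, hx1, hl1⟩, ⟨x2, hx2, hl2⟩, hb1, hb2⟩ := hsplit (pn b) ξ t hts hgood hbd
    (by rw [Subspace.dual_finrank_eq]; exact hcard)
  obtain ⟨P1, hP1, hP1G⟩ := hloc x1 hx1
  obtain ⟨P2, hP2, hP2G⟩ := hloc x2 hx2
  let z : α → W := fun y => lam y • P1 y + (1 - lam y) • P2 y
  have hz : ∀ y ∈ t.leaves, z y ∈ G y := by
    intro y hy
    simp only [z]
    by_cases h1 : y = x1
    · subst h1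
      rw [hl1]; simp
      refine hP2G y hy ?_
      rintro rfl; linarith
    by_cases h2 : y = x2
    · subst h2
      rw [hl2]; simp
      exact hP1G y hy h1
    exact hG y hy (hP1G y hy h1) (hP2G y hy h2) (hlam y hy).1 (by linarith [(hlam y hy).2]) (by ring)
  have hlow : γ / 2 ≤ ∑ x ∈ t.leaves, ξ x (z x) := by
    rw [hξ, ← hgu]
    refine mul_le_mul_of_nonneg_left (hfZ _ ?_) hgu0.le
    intro y hy
    simp only [hy, if_true]
    exact hz y hy
  have hsum : ∑ x ∈ t.leaves, ξ x (z x) =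
      ∑ x ∈ t.leaves, lam x * ξ x (P1 x) + ∑ x ∈ t.leaves, (1 - lam x) * ξ x (P2 x) := by
    rw [← Finset.sum_add_distrib]
    exact Finset.sum_congr rfl fun x _ => by simp only [z, map_add, map_smul, smul_eq_mul]
  have k1 := (abs_le.mp (pair_bound hM.le hgood hb1 hP1)).2
  have k2 := (abs_le.mp (pair_bound hM.le hgood hb2 hP2)).2
  have hsz : (2 * (t.sz:ℝ) - 1) * (C0 * M) ≤ 2 * s * (C0 * M) := by
    apply mul_le_mul_of_nonneg_right _ (by positivity)
    have : (t.sz : ℝ) ≤ s := by exact_mod_cast hts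
    linarith
  rw [hsum] at hlow
  have : γ / 2 = 4 * s * C0 * M + M / 2 := by rw [hγd]; ring
  nlinarith

/-- Selection along a tree. -/
theorem sel [FiniteDimensional ℝ W] (A : ℝ) (hA : 0 ≤ A) (s : ℕ) :
    ∃ C : ℝ, 1 ≤ C ∧ ∀ (b : E → ι → W) (t : HT α E), t.sz ≤ s → Good (pn b) A t → Spn b t →
      2 ^ (Module.finrank ℝ W) < t.leaves.card → ∀ G : α → Set W, (∀ x ∈ t.leaves, Convex ℝ (G x)) →
      ∀ M : ℝ, 0 < M → (∀ x ∈ t.leaves, ∃ P, Rep b (cbox ι M) t P ∧ ∀ y ∈ t.leaves, y ≠ x → P y ∈ G y) →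
      ∃ P, Rep b (cbox ι (C * M)) t P ∧ ∀ y ∈ t.leaves, P y ∈ G y := by
  letI : TopologicalSpace W := moduleTopology ℝ W
  haveI : IsModuleTopology ℝ W := ⟨rfl⟩
  haveI : ContinuousSMul ℝ W := IsModuleTopology.toContinuousSMul ℝ W
  haveI : IsTopologicalAddGroup W := IsModuleTopology.topologicalAddGroup ℝ W
  exact sel_aux A hA s

end HT

end PartA4

section PartB1
namespace HT

variable {X : Type} [MetricSpace X]

/-- A representative leaf. -/
def rep {E : Type} : HT X E → X
  | leaf _ x => x
  | node _ l _ => l.rep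

theorem rep_mem {E : Type} (t : HT X E) : t.rep ∈ t.leaves := by
  induction t with
  | leaf e x => simp [rep, leaves]
  | node e l r hl hr => simp [rep, leaves, hl]

/-- Geometric trees: edges carry a base point and a scale. -/
def Geo (κ : ℝ) : HT X (X × ℝ) → Prop
  | leaf e x => e.1 = x ∧ 0 < e.2 ∧ e.2 ≤ 1
  | node e l r => (e.1 = l.rep ∧ 0 < e.2 ∧ e.2 ≤ 1) ∧ Disjoint l.leaves r.leaves ∧
      r.edge.2 = l.edge.2 ∧ l.edge.2 ≤ e.2 ∧
      (∀ x ∈ l.leaves ∪ r.leaves, ∀ y ∈ l.leaves ∪ r.leaves, dist x y ≤ l.edge.2) ∧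
      (∀ x ∈ l.leaves, ∀ y ∈ r.leaves, κ * l.edge.2 ≤ dist x y) ∧ Geo κ l ∧ Geo κ r

theorem Geo.edge {κ : ℝ} {t : HT X (X × ℝ)} (h : Geo κ t) :
    t.edge.1 = t.rep ∧ 0 < t.edge.2 ∧ t.edge.2 ≤ 1 := by
  cases t with
  | leaf e x => exact h
  | node e l r => exact h.1

theorem exists_geo (N : ℕ) (hN : 0 < N) (k : ℕ) : ∀ S : Finset X, S.card ≤ k → S.card ≤ N → S.Nonempty → ∀ δ : ℝ, 0 < δ → δ ≤ 1 →
    (∀ x ∈ S, ∀ y ∈ S, dist x y ≤ δ) →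
    ∃ t : HT X (X × ℝ), t.leaves = S ∧ t.sz = S.card ∧ t.edge.2 = δ ∧ Geo (1 / N) t := by
  have hN0 : (0:ℝ) < N := by exact_mod_cast hN
  induction k with
  | zero =>
    intro S h1 _ h2
    have := Finset.card_pos.mpr h2
    omega
  | succ k ih =>
    intro S hSk hSN hSne δ hδ hδ1 hdist
    by_cases hcard : S.card = 1
    · obtain ⟨x, rfl⟩ := Finset.card_eq_one.mp hcard
      exact ⟨leaf (x, δ) x, rfl, by simp [sz], rfl, rfl, hδ, hδ1⟩
    have hcard2 : 1 < S.card := by have := Finset.card_pos.mpr hSne; omega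
    obtain ⟨⟨a, c⟩, hac, hmax⟩ := (S ×ˢ S).exists_max_image (fun q => dist q.1 q.2) (hSne.product hSne)
    rw [Finset.mem_product] at hac
    obtain ⟨ha, hc⟩ := hac
    simp only at ha hc
    have hmax' : ∀ x ∈ S, ∀ y ∈ S, dist x y ≤ dist a c := fun x hx y hy =>
      hmax (x, y) (Finset.mem_product.mpr ⟨hx, hy⟩)
    set ε := dist a c with hε
    have hε0 : 0 < ε := by
      obtain ⟨x, hx, y, hy, hxy⟩ := Finset.one_lt_card.mp hcard2
      exact lt_of_lt_of_le (dist_pos.mpr hxy) (hmax' x hx y hy)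
    let φ : X → ℕ := fun x => ⌊N * dist a x / ε⌋₊
    have hφa : φ a = 0 := by simp [φ]
    have hφc : φ c = N := by
      simp only [φ, ← hε]; rw [mul_div_assoc, div_self hε0.ne', mul_one, Nat.floor_natCast]
    obtain ⟨j, hjN, hj⟩ : ∃ j < N, ∀ x ∈ S, φ x ≠ j := by
      by_contra hcon
      push Not at hcon
      have hsub : Finset.range (N + 1) ⊆ S.image φ := by
        intro j hj
        rw [Finset.mem_range] at hj
        rw [Finset.mem_image]
        rcases Nat.lt_succ_iff_lt_or_eq.mp hj with h | h
        · exact hcon j h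
        · exact ⟨c, hc, h ▸ hφc⟩
      have h1 := Finset.card_le_card hsub
      have h2 := Finset.card_image_le (s := S) (f := φ)
      rw [Finset.card_range] at h1
      omega
    let S1 := S.filter (fun x => φ x < j)
    let S2 := S.filter (fun x => ¬ φ x < j)
    have hunion : S1 ∪ S2 = S := Finset.filter_union_filter_not_eq _ _
    have hdis : Disjoint S1 S2 := Finset.disjoint_filter_filter_not _ _ _
    have hcs : S1.card + S2.card = S.card := by rw [← Finset.card_union_of_disjoint hdis, hunion]
    have haS1 : a ∈ S1 := by
      simp only [S1, Finset.mem_filter]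
      exact ⟨ha, by have := hj a ha; omega⟩
    have hcS2 : c ∈ S2 := by
      simp only [S2, Finset.mem_filter]
      exact ⟨hc, by omega⟩
    have h1 := Finset.card_pos.mpr ⟨a, haS1⟩
    have h2 := Finset.card_pos.mpr ⟨c, hcS2⟩
    have hS1 : S1 ⊆ S := Finset.filter_subset _ _
    have hS2 : S2 ⊆ S := Finset.filter_subset _ _
    have hεδ : ε ≤ δ := hdist a ha c hc
    obtain ⟨l, l1, l2, l3, l4⟩ := ih S1 (by omega) (by omega) ⟨a, haS1⟩ ε hε0 (hεδ.trans hδ1)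
      (fun x hx y hy => hmax' x (hS1 hx) y (hS1 hy))
    obtain ⟨r, r1, r2, r3, r4⟩ := ih S2 (by omega) (by omega) ⟨c, hcS2⟩ ε hε0 (hεδ.trans hδ1)
      (fun x hx y hy => hmax' x (hS2 hx) y (hS2 hy))
    refine ⟨node (l.rep, δ) l r, by simp [leaves, l1, r1, hunion], by simp [sz, l2, r2, hcs], rfl,
      ⟨rfl, hδ, hδ1⟩, by rw [l1, r1]; exact hdis, by rw [l3, r3], by rw [l3]; exact hεδ, ?_, ?_, l4, r4⟩
    · rw [l1, r1, hunion, l3]; exact hmax'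
    · rw [l1, r1, l3]
      intro x hx y hy
      simp only [S1, S2, Finset.mem_filter] at hx hy
      have hy' : j + 1 ≤ φ y := by have := hj y hy.1; omega
      have e1 : N * dist a x / ε < j := by
        have := Nat.lt_of_floor_lt hx.2
        exact this
      have e2 : ((j + 1 : ℕ) : ℝ) ≤ N * dist a y / ε := (Nat.le_floor_iff (by positivity)).mp hy'
      push_cast at e2
      rw [div_lt_iff₀ hε0] at e1
      rw [le_div_iff₀ hε0] at e2
      have e3 : dist a y ≤ dist a x + dist x y := dist_triangle _ _ _
      rw [one_div, inv_mul_le_iff₀ hN0]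
      nlinarith

end HT

end PartB1

section PartC1
/-- Iterated partial derivatives along a list of directions. -/
def pdL {n : ℕ} (L : List (Fin n)) (f : En n → ℝ) : En n → ℝ := L.foldr pd1 f

/-- The list of directions of a multi-index. -/
def lst {n : ℕ} (α : Fin n → ℕ) : List (Fin n) := (List.finRange n).flatMap fun i => List.replicate (α i) i

variable {n : ℕ}

@[simp] theorem pdL_nil (f : En n → ℝ) : pdL [] f = f := rfl
theorem pdL_cons (i : Fin n) (L : List (Fin n)) (f : En n → ℝ) : pdL (i :: L) f = pd1 i (pdL L f) := rfl

theorem pdalpha_eq (α : Fin n → ℕ) (f : En n → ℝ) : pdalpha α f = pdL (lst α) f := by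
  unfold pdalpha pdL lst
  have h1 : ∀ (i : Fin n) (k : ℕ) (g : En n → ℝ), (pd1 i)^[k] g = (List.replicate k i).foldr pd1 g := by
    intro i k g
    induction k with
    | zero => rfl
    | succ k ih => rw [Function.iterate_succ_apply', ih, List.replicate_succ, List.foldr_cons]
  generalize List.finRange n = l
  induction l with
  | nil => rfl
  | cons a l ih => rw [List.foldr_cons, ih, List.flatMap_cons, List.foldr_append, h1]

theorem lst_count (α : Fin n → ℕ) (i : Fin n) : (lst α).count i = α i := by
  unfold lst
  rw [List.count_flatMap]
  have : (List.count i ∘ fun i => List.replicate (α i) i) = fun j => if j = i then α j else 0 := by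
    funext j
    simp [List.count_replicate]
  rw [this, ← Fin.sum_univ_def]
  simp

theorem sum_count (L : List (Fin n)) : ∑ i, L.count i = L.length := by
  induction L with
  | nil => simp
  | cons a L ih =>
    simp only [List.count_cons, Finset.sum_add_distrib, ih, List.length_cons]
    simp

theorem lst_length (α : Fin n → ℕ) : (lst α).length = ∑ i, α i := by
  rw [← sum_count]; simp [lst_count]

theorem perm_lst (L : List (Fin n)) : L.Perm (lst fun i => L.count i) := by
  rw [List.perm_iff_count]; intro i; rw [lst_count]

theorem contDiff_pd1 {k : ℕ} {f : En n → ℝ} (hf : ContDiff ℝ (k + 1 : ℕ) f) (i : Fin n) :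
    ContDiff ℝ k (pd1 i f) := by
  unfold pd1
  exact (hf.fderiv_right (m := k) (by norm_cast)).clm_apply contDiff_const

theorem contDiff_pdL {k : ℕ} {f : En n → ℝ} (L : List (Fin n)) (hf : ContDiff ℝ (k + L.length : ℕ) f) :
    ContDiff ℝ k (pdL L f) := by
  induction L generalizing k with
  | nil => simpa using hf
  | cons i L ih =>
    rw [pdL_cons]
    apply contDiff_pd1
    apply ih
    convert hf using 2
    simp; ring

theorem pd1_comm {f : En n → ℝ} (hf : ContDiff ℝ 2 f) (i j : Fin n) : pd1 i (pd1 j f) = pd1 j (pd1 i f) := by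
  have hd : Differentiable ℝ (fderiv ℝ f) := (hf.fderiv_right (m := 1) (by norm_num)).differentiable (by norm_num)
  have key : ∀ i j : Fin n, ∀ x, pd1 i (pd1 j f) x =
      fderiv ℝ (fderiv ℝ f) x (EuclideanSpace.single i 1) (EuclideanSpace.single j 1) := by
    intro i j x
    unfold pd1
    rw [fderiv_clm_apply (hd x) (differentiableAt_const _)]
    simp
  funext x
  rw [key, key]
  have : IsSymmSndFDerivAt ℝ f x := by
    apply ContDiffAt.isSymmSndFDerivAt (n := 2) hf.contDiffAt
    simp
  exact this _ _

theorem pdL_perm {L L' : List (Fin n)} (h : L.Perm L') {f : En n → ℝ} (hf : ContDiff ℝ L.length f) :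
    pdL L f = pdL L' f := by
  induction h with
  | nil => rfl
  | cons a h ih =>
    rw [pdL_cons, pdL_cons, ih (hf.of_le (by simp))]
  | swap a c l =>
    rw [pdL_cons, pdL_cons, pdL_cons, pdL_cons]
    exact pd1_comm (contDiff_pdL (k := 2) l (by convert hf using 2; simp; ring)) _ _
  | trans h1 h2 ih1 ih2 =>
    rw [ih1 hf, ih2 (by rw [← h1.length_eq]; exact hf)]

theorem pd1_sub {f g : En n → ℝ} (hf : Differentiable ℝ f) (hg : Differentiable ℝ g) (i : Fin n) :
    pd1 i (fun x => f x - g x) = fun x => pd1 i f x - pd1 i g x := by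
  funext x
  unfold pd1
  rw [fderiv_fun_sub (hf x) (hg x)]; rfl

theorem pd1_add {f g : En n → ℝ} (hf : Differentiable ℝ f) (hg : Differentiable ℝ g) (i : Fin n) :
    pd1 i (fun x => f x + g x) = fun x => pd1 i f x + pd1 i g x := by
  funext x
  unfold pd1
  rw [fderiv_fun_add (hf x) (hg x)]; rfl

theorem pd1_const_mul {f : En n → ℝ} (hf : Differentiable ℝ f) (c : ℝ) (i : Fin n) :
    pd1 i (fun x => c * f x) = fun x => c * pd1 i f x := by
  funext x
  unfold pd1
  rw [fderiv_const_mul (hf x)]; rfl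

theorem diff_pdL {f : En n → ℝ} {L : List (Fin n)} {k : ℕ} (hk : L.length < k) (hf : ContDiff ℝ k f) :
    Differentiable ℝ (pdL L f) :=
  (contDiff_pdL (k := 1) L (hf.of_le (by exact_mod_cast (by omega : 1 + L.length ≤ k)))).differentiable (by norm_num)

theorem pdL_sub {f g : En n → ℝ} (L : List (Fin n)) (hf : ContDiff ℝ L.length f) (hg : ContDiff ℝ L.length g) :
    pdL L (fun x => f x - g x) = fun x => pdL L f x - pdL L g x := by
  induction L with
  | nil => rfl
  | cons i L ih =>
    rw [pdL_cons, ih (hf.of_le (by simp)) (hg.of_le (by simp)),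
      pd1_sub (diff_pdL (by simp) hf) (diff_pdL (by simp) hg)]
    rfl

theorem pdL_add {f g : En n → ℝ} (L : List (Fin n)) (hf : ContDiff ℝ L.length f) (hg : ContDiff ℝ L.length g) :
    pdL L (fun x => f x + g x) = fun x => pdL L f x + pdL L g x := by
  induction L with
  | nil => rfl
  | cons i L ih =>
    rw [pdL_cons, ih (hf.of_le (by simp)) (hg.of_le (by simp)),
      pd1_add (diff_pdL (by simp) hf) (diff_pdL (by simp) hg)]
    rfl

theorem pdL_const_mul {f : En n → ℝ} (c : ℝ) (L : List (Fin n)) (hf : ContDiff ℝ L.length f) :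
    pdL L (fun x => c * f x) = fun x => c * pdL L f x := by
  induction L with
  | nil => rfl
  | cons i L ih =>
    rw [pdL_cons, ih (hf.of_le (by simp)), pd1_const_mul (diff_pdL (by simp) hf)]
    rfl

theorem pdL_zero (L : List (Fin n)) : pdL L (fun _ => 0) = fun _ => 0 := by
  induction L with
  | nil => rfl
  | cons i L ih => rw [pdL_cons, ih]; funext x; simp [pd1]

theorem pdL_sum {ι : Type} (s : Finset ι) (f : ι → En n → ℝ) (L : List (Fin n))
    (hf : ∀ i ∈ s, ContDiff ℝ L.length (f i)) :
    pdL L (fun x => ∑ i ∈ s, f i x) = fun x => ∑ i ∈ s, pdL L (f i) x := by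
  induction s using Finset.induction_on with
  | empty => simpa using pdL_zero L
  | insert a s ha ih =>
    simp only [Finset.sum_insert ha]
    rw [pdL_add L (hf a (by simp)) (ContDiff.sum fun i hi => hf i (by simp [hi])),
      ih fun i hi => hf i (by simp [hi])]

theorem pdL_congr {f g : En n → ℝ} {x : En n} (h : f =ᶠ[nhds x] g) (L : List (Fin n)) :
    pdL L f =ᶠ[nhds x] pdL L g := by
  induction L with
  | nil => exact h
  | cons i L ih =>
    rw [pdL_cons, pdL_cons]
    filter_upwards [ih.fderiv (𝕜 := ℝ)] with y hy
    unfold pd1; rw [hy]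

theorem norm_iter_pdL {f : En n → ℝ} (L : List (Fin n)) (k : ℕ) (hf : ContDiff ℝ (k + L.length : ℕ) f) (x : En n) :
    ‖iteratedFDeriv ℝ k (pdL L f) x‖ ≤ ‖iteratedFDeriv ℝ (k + L.length) f x‖ := by
  induction L generalizing k with
  | nil => simp
  | cons i L ih =>
    have h1 := ih (k + 1) (by convert hf using 2; simp; ring)
    have h2 : ContDiff ℝ (k + 1 : ℕ) (pdL L f) := contDiff_pdL L (by convert hf using 2; simp; ring)
    rw [pdL_cons]
    have h3 : ‖iteratedFDeriv ℝ k (pd1 i (pdL L f)) x‖ ≤ ‖iteratedFDeriv ℝ (k + 1) (pdL L f) x‖ := by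
      have h4 : ContDiff ℝ k (fderiv ℝ (pdL L f)) := h2.fderiv_right (by norm_cast)
      have := norm_iteratedFDeriv_clm_apply_const (f := fderiv ℝ (pdL L f)) (c := EuclideanSpace.single i (1:ℝ))
        (x := x) (N := k) (n := k) h4.contDiffAt le_rfl
      rw [norm_iteratedFDeriv_fderiv] at this
      have h5 : pd1 i (pdL L f) = fun y => (fderiv ℝ (pdL L f) y) (EuclideanSpace.single i 1) := rfl
      rw [h5]
      simpa using this
    refine h3.trans (h1.trans (le_of_eq ?_))
    rw [List.length_cons, show k + 1 + L.length = k + (L.length + 1) by ring]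

theorem abs_pdL_le {f : En n → ℝ} (L : List (Fin n)) (hf : ContDiff ℝ L.length f) (x : En n) :
    |pdL L f x| ≤ ‖iteratedFDeriv ℝ L.length f x‖ := by
  have := norm_iter_pdL L 0 (by simpa using hf) x
  rw [Nat.zero_add] at this
  simpa using this

/-- Operator norm of the derivative in terms of partial derivatives. -/
theorem norm_fderiv_le {g : En n → ℝ} {x : En n} {K : ℝ} (hK : ∀ i, |pd1 i g x| ≤ K) (hK0 : 0 ≤ K) :
    ‖fderiv ℝ g x‖ ≤ n * K := by
  refine ContinuousLinearMap.opNorm_le_bound _ (by positivity) fun v => ?_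
  have hv : v = ∑ i, v i • EuclideanSpace.single i (1:ℝ) := by
    ext j; simp [Pi.single_apply]
  have h1 : fderiv ℝ g x v = ∑ i, v i * pd1 i g x := by
    conv_lhs => rw [hv]
    rw [map_sum]; simp [pd1]
  rw [h1]
  refine (norm_sum_le _ _).trans ?_
  calc ∑ i, ‖v i * pd1 i g x‖ ≤ ∑ i : Fin n, K * ‖v‖ := Finset.sum_le_sum fun i _ => by
        rw [norm_mul, mul_comm]
        exact mul_le_mul (hK i) (PiLp.norm_apply_le v i) (norm_nonneg _) hK0
    _ = n * K * ‖v‖ := by simp; ring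

/-- Taylor bound by repeated use of the mean value inequality. -/
theorem taylor_bound {m : ℕ} {R : En n → ℝ} {M : ℝ} (hM : 0 ≤ M) (hR : ContDiff ℝ m R) (x : En n)
    (h0 : ∀ L : List (Fin n), L.length < m → pdL L R x = 0)
    (h1 : ∀ L : List (Fin n), L.length = m → ∀ z, |pdL L R z| ≤ M) (k : ℕ) :
    ∀ L : List (Fin n), L.length + k = m → ∀ z, |pdL L R z| ≤ n ^ k * M * ‖z - x‖ ^ k := by
  induction k with
  | zero => intro L hL z; simpa using h1 L (by simpa using hL) z
  | succ k ih =>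
    intro L hL z
    have hd : Differentiable ℝ (pdL L R) := diff_pdL (k := m) (by omega) hR
    have hx := h0 L (by omega)
    have hb : ∀ w ∈ Metric.closedBall x ‖z - x‖, ‖fderiv ℝ (pdL L R) w‖ ≤ n * (n ^ k * M * ‖z - x‖ ^ k) := by
      intro w hw
      rw [Metric.mem_closedBall, dist_eq_norm] at hw
      refine norm_fderiv_le (fun i => ?_) (by positivity)
      have := ih (i :: L) (by simp; omega) w
      rw [pdL_cons] at this
      refine this.trans ?_
      gcongr
    have := (convex_closedBall x ‖z - x‖).norm_image_sub_le_of_norm_fderiv_le (𝕜 := ℝ)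
      (fun w _ => hd w) hb (Metric.mem_closedBall_self (norm_nonneg _))
      (show z ∈ _ by rw [Metric.mem_closedBall, dist_eq_norm])
    rw [hx, sub_zero, Real.norm_eq_abs] at this
    refine this.trans (le_of_eq (by ring))

end PartC1

section PartC2
variable {n : ℕ}

/-- Shifted monomial function. -/
def mon (y : En n) (α : Fin n → ℕ) : En n → ℝ := fun z => ∏ i, (z i - y i) ^ (α i)

/-- Shifted monomial polynomial. -/
def PM (y : En n) (α : Fin n → ℕ) : MvPolynomial (Fin n) ℝ :=
  ∏ i, (MvPolynomial.X i - MvPolynomial.C (y i)) ^ (α i)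

theorem eval_PM (y z : En n) (α : Fin n → ℕ) : MvPolynomial.eval (fun i => z i) (PM y α) = mon y α z := by
  simp [PM, mon, MvPolynomial.eval_prod]

theorem contDiff_mon (y : En n) (α : Fin n → ℕ) (k : WithTop ℕ∞) : ContDiff ℝ k (mon y α) := by
  unfold mon
  apply contDiff_prod
  intro i _
  fun_prop

theorem pd1_mon (y : En n) (α : Fin n → ℕ) (i : Fin n) :
    pd1 i (mon y α) = fun z => (α i : ℝ) * mon y (Function.update α i (α i - 1)) z := by
  funext z
  have hd : DifferentiableAt ℝ (mon y α) z := ((contDiff_mon y α 1).differentiable (by norm_num)) z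
  unfold pd1
  rw [← hd.lineDeriv_eq_fderiv]
  apply HasLineDerivAt.lineDeriv
  unfold HasLineDerivAt
  have h1 : (fun t : ℝ => mon y α (z + t • EuclideanSpace.single i 1)) =
      fun t => (z i + t - y i) ^ (α i) * ∏ j ∈ Finset.univ.erase i, (z j - y j) ^ (α j) := by
    funext t
    unfold mon
    rw [← Finset.mul_prod_erase _ _ (Finset.mem_univ i)]
    congr 1
    · simp
    · refine Finset.prod_congr rfl fun j hj => ?_
      simp [(Finset.mem_erase.mp hj).1]
  rw [h1]
  have h2 : HasDerivAt (fun t : ℝ => z i + t - y i) 1 0 := by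
    simpa using ((hasDerivAt_id (0:ℝ)).const_add (z i)).sub_const (y i)
  have h3 := (h2.pow (α i)).mul_const (∏ j ∈ Finset.univ.erase i, (z j - y j) ^ (α j))
  refine h3.congr_deriv ?_
  unfold mon
  rw [← Finset.mul_prod_erase _ _ (Finset.mem_univ i)]
  simp only [Function.update_self, add_zero, mul_one]
  have h4 : ∏ j ∈ Finset.univ.erase i, (z j - y j) ^ (Function.update α i (α i - 1) j) =
      ∏ j ∈ Finset.univ.erase i, (z j - y j) ^ (α j) :=
    Finset.prod_congr rfl fun j hj => by rw [Function.update_of_ne (Finset.mem_erase.mp hj).1]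
  rw [h4]
  ring

theorem pdL_mon (y : En n) (α : Fin n → ℕ) (L : List (Fin n)) :
    pdL L (mon y α) = fun z => (∏ i, ((α i).descFactorial (L.count i) : ℝ)) * mon y (fun i => α i - L.count i) z := by
  induction L with
  | nil => funext z; simp
  | cons i L ih =>
    rw [pdL_cons, ih, pd1_const_mul ((contDiff_mon _ _ 1).differentiable (by norm_num)), pd1_mon]
    funext z
    rw [← mul_assoc]
    congr 1
    · rw [← Finset.mul_prod_erase _ _ (Finset.mem_univ i), ← Finset.mul_prod_erase Finset.univ (fun j => (((α j).descFactorial (List.count j (i :: L)) : ℕ) : ℝ)) (Finset.mem_univ i)]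
      rw [List.count_cons_self, Nat.descFactorial_succ]
      rw [Finset.prod_congr (s₁ := Finset.univ.erase i) (f := fun j => (((α j).descFactorial (List.count j (i :: L)) : ℕ) : ℝ)) rfl fun j hj => by
        rw [List.count_cons_of_ne (Finset.mem_erase.mp hj).1.symm]]
      push_cast
      ring
    · congr 1
      funext j
      by_cases hj : j = i
      · subst hj; simp; omega
      · rw [Function.update_of_ne hj, List.count_cons_of_ne (Ne.symm hj)]

theorem mon_self (y : En n) (α : Fin n → ℕ) : mon y α y = if (∀ i, α i = 0) then 1 else 0 := by
  unfold mon
  split_ifs with h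
  · simp [h]
  · push Not at h
    obtain ⟨i, hi⟩ := h
    exact Finset.prod_eq_zero (Finset.mem_univ i) (by simp [hi])

theorem pdL_mon_self (y : En n) (α : Fin n → ℕ) (L : List (Fin n)) :
    pdL L (mon y α) y = if α = (fun i => L.count i) then ((∏ i, (α i).factorial : ℕ) : ℝ) else 0 := by
  rw [pdL_mon]
  simp only [mon_self]
  split_ifs with h1 h2 h2
  · simp [h2, Nat.descFactorial_self]
  · have : ∃ i, α i < L.count i := by
      by_contra hcon
      push Not at hcon
      exact h2 (funext fun i => le_antisymm (by have := h1 i; omega) (hcon i))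
    obtain ⟨i, hi⟩ := this
    rw [Finset.prod_eq_zero (Finset.mem_univ i) (by exact_mod_cast Nat.descFactorial_of_lt hi), zero_mul]
  · exact absurd (fun i => by rw [h2]; simp) h1
  · simp

theorem pdL_mon_zero (y : En n) (α : Fin n → ℕ) (L : List (Fin n)) (h : ∑ i, α i < L.length) :
    pdL L (mon y α) = fun _ => 0 := by
  rw [pdL_mon]
  rw [← sum_count] at h
  obtain ⟨i, -, hi⟩ := Finset.exists_lt_of_sum_lt h
  funext z
  rw [Finset.prod_eq_zero (Finset.mem_univ i) (by exact_mod_cast Nat.descFactorial_of_lt hi), zero_mul]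

/-- Multi-indices of order at most `m-1`. -/
def MI (m n : ℕ) : Type := {α : Fin n → Fin m // (∑ i, (α i : ℕ)) ≤ m - 1}

instance (m n : ℕ) : Fintype (MI m n) := by unfold MI; infer_instance

/-- Exponents. -/
def ex {m n : ℕ} (a : MI m n) : Fin n → ℕ := fun i => (a.1 i : ℕ)

theorem ex_inj {m n : ℕ} {a b : MI m n} (h : ex a = ex b) : a = b := by
  apply Subtype.ext; funext i; apply Fin.ext; exact congrFun h i

/-- Order. -/
def ord {m n : ℕ} (a : MI m n) : ℕ := ∑ i, ex a i

theorem ord_le {m n : ℕ} (a : MI m n) : ord a ≤ m - 1 := a.2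

variable {m : ℕ}

theorem exists_MI (hm : 1 ≤ m) (γ : Fin n → ℕ) (h : ∑ i, γ i < m) : ∃ a : MI m n, ex a = γ := by
  have h1 : ∀ i, γ i < m := fun i => lt_of_le_of_lt (Finset.single_le_sum (fun _ _ => Nat.zero_le _) (Finset.mem_univ i)) h
  exact ⟨⟨fun i => ⟨γ i, h1 i⟩, by simp only []; omega⟩, rfl⟩

/-- Factorial of a multi-index. -/
def fac (a : MI m n) : ℝ := ((∏ i, (ex a i).factorial : ℕ) : ℝ)

theorem fac_one_le (a : MI m n) : 1 ≤ fac a := by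
  unfold fac
  exact_mod_cast Nat.one_le_iff_ne_zero.mpr (Finset.prod_ne_zero_iff.mpr fun i _ => Nat.factorial_ne_zero _)

theorem jetScalar_eq (f : En n → ℝ) (x : En n) :
    jetScalar m f x = ∑ a : MI m n, (pdL (lst (ex a)) f x / fac a) • PM x (ex a) := by
  unfold jetScalar
  rw [Finset.sum_subtype (p := fun α : Fin n → Fin m => (∑ i, (α i : ℕ)) ≤ m - 1) _ (by simp)]
  refine Finset.sum_congr rfl fun a _ => ?_
  rw [MvPolynomial.smul_eq_C_mul, pdalpha_eq]
  rfl

theorem pdL_poly_self (x : En n) (c : MI m n → ℝ) (a : MI m n) :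
    pdL (lst (ex a)) (fun z => ∑ b : MI m n, c b * mon x (ex b) z) x = c a * fac a := by
  rw [pdL_sum _ _ _ fun b _ => contDiff_const.mul (contDiff_mon _ _ _)]
  simp only []
  rw [Finset.sum_eq_single a]
  · rw [pdL_const_mul _ _ (contDiff_mon _ _ _)]
    simp only []
    rw [pdL_mon_self, if_pos (by funext i; rw [lst_count])]
    rfl
  · intro b _ hb
    rw [pdL_const_mul _ _ (contDiff_mon _ _ _)]
    simp only []
    rw [pdL_mon_self, if_neg, mul_zero]
    intro h
    apply hb
    apply ex_inj
    rw [h]; funext i; rw [lst_count]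
  · simp

theorem jet_repro (x : En n) (c : MI m n → ℝ) :
    jetScalar m (fun z => ∑ b : MI m n, c b * mon x (ex b) z) x = ∑ a : MI m n, c a • PM x (ex a) := by
  rw [jetScalar_eq]
  refine Finset.sum_congr rfl fun a _ => ?_
  rw [pdL_poly_self, mul_div_assoc, div_self (by have := fac_one_le a; positivity), mul_one]

/-- Translation coefficients. -/
def tc (y x : En n) (b a : MI m n) : ℝ := ∏ i, (((ex b i).choose (ex a i) : ℝ) * (x i - y i) ^ (ex b i - ex a i))

theorem PM_translate (y x : En n) (b : MI m n) : PM y (ex b) = ∑ a : MI m n, tc y x b a • PM x (ex a) := by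
  have h1 : ∀ i, (MvPolynomial.X i - MvPolynomial.C (y i) : MvPolynomial (Fin n) ℝ) ^ (ex b i) =
      ∑ j : Fin m, MvPolynomial.C (((ex b i).choose j : ℝ) * (x i - y i) ^ (ex b i - j)) *
        (MvPolynomial.X i - MvPolynomial.C (x i)) ^ (j : ℕ) := by
    intro i
    have hlt : ex b i < m := (b.1 i).2
    have e1 : (MvPolynomial.X i - MvPolynomial.C (y i) : MvPolynomial (Fin n) ℝ) =
        (MvPolynomial.X i - MvPolynomial.C (x i)) + MvPolynomial.C (x i - y i) := by
      rw [map_sub]; ring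
    rw [e1, add_pow, Finset.sum_range]
    have := Fin.sum_univ_eq_sum_range (fun j => MvPolynomial.C (((ex b i).choose j : ℝ) * (x i - y i) ^ (ex b i - j)) *
        (MvPolynomial.X i - MvPolynomial.C (x i) : MvPolynomial (Fin n) ℝ) ^ (j : ℕ)) m
    rw [this, Fin.sum_univ_eq_sum_range (fun j => (MvPolynomial.X i - MvPolynomial.C (x i)) ^ j *
      MvPolynomial.C (x i - y i) ^ (ex b i - j) * (((ex b i).choose j : ℕ) : MvPolynomial (Fin n) ℝ)) (ex b i + 1)]
    rw [← Finset.sum_subset (Finset.range_subset_range.mpr (by omega : ex b i + 1 ≤ m))]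
    · refine Finset.sum_congr rfl fun j _ => ?_
      rw [map_mul, map_pow, map_natCast]; ring
    · intro j _ hj
      rw [Finset.mem_range] at hj
      rw [Nat.choose_eq_zero_of_lt (by omega)]; simp
  unfold PM
  rw [Finset.prod_congr rfl fun i _ => h1 i, Finset.prod_univ_sum, Fintype.piFinset_univ]
  have h2 : ∀ α : Fin n → Fin m, ∏ i, (MvPolynomial.C (((ex b i).choose (α i) : ℝ) * (x i - y i) ^ (ex b i - (α i : ℕ))) *
        (MvPolynomial.X i - MvPolynomial.C (x i) : MvPolynomial (Fin n) ℝ) ^ (α i : ℕ)) =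
      (∏ i, (((ex b i).choose (α i) : ℝ) * (x i - y i) ^ (ex b i - (α i : ℕ)))) •
        ∏ i, (MvPolynomial.X i - MvPolynomial.C (x i) : MvPolynomial (Fin n) ℝ) ^ (α i : ℕ) := by
    intro α
    rw [Finset.prod_mul_distrib, MvPolynomial.smul_eq_C_mul, map_prod]
  rw [Finset.sum_congr rfl fun α _ => h2 α]
  rw [← Finset.sum_filter_add_sum_filter_not _ (fun α : Fin n → Fin m => (∑ i, (α i : ℕ)) ≤ m - 1)]
  rw [Finset.sum_eq_zero (s := Finset.filter (fun α : Fin n → Fin m => ¬ (∑ i, (α i : ℕ)) ≤ m - 1) _), add_zero]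
  · rw [Finset.sum_subtype (p := fun α : Fin n → Fin m => (∑ i, (α i : ℕ)) ≤ m - 1) _ (by simp)]
    rfl
  · intro α hα
    rw [Finset.mem_filter] at hα
    have : ∑ i, ex b i < ∑ i, (α i : ℕ) := lt_of_le_of_lt b.2 (not_le.mp hα.2)
    obtain ⟨i, -, hi⟩ := Finset.exists_lt_of_sum_lt this
    rw [Finset.prod_eq_zero (Finset.mem_univ i) (by rw [Nat.choose_eq_zero_of_lt hi]; simp), zero_smul]

theorem abs_coord_le (x y : En n) (i : Fin n) : |x i - y i| ≤ dist x y := by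
  rw [dist_eq_norm]
  exact PiLp.norm_apply_le (x - y) i

theorem tc_bound (y x : En n) {δ : ℝ} (hδ : 0 ≤ δ) (h : dist x y ≤ δ) (b a : MI m n) :
    tc y x b a = 0 ∨ (ord a ≤ ord b ∧ |tc y x b a| ≤ 2 ^ (m * n) * δ ^ (ord b - ord a)) := by
  by_cases hab : ∀ i, ex a i ≤ ex b i
  · right
    refine ⟨Finset.sum_le_sum fun i _ => hab i, ?_⟩
    unfold tc
    rw [Finset.abs_prod]
    have h1 : ord b - ord a = ∑ i, (ex b i - ex a i) := by
      unfold ord; rw [Finset.sum_tsub_distrib _ fun i _ => hab i]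
    rw [h1, ← Finset.prod_pow_eq_pow_sum, pow_mul]
    have h2 : ((2:ℝ) ^ m) ^ n = ∏ i : Fin n, (2:ℝ) ^ m := by simp
    rw [h2, ← Finset.prod_mul_distrib]
    refine Finset.prod_le_prod (fun i _ => abs_nonneg _) fun i _ => ?_
    rw [abs_mul, abs_pow]
    refine mul_le_mul ?_ (pow_le_pow_left₀ (abs_nonneg _) ((abs_coord_le x y i).trans h) _) (by positivity) (by positivity)
    rw [abs_of_nonneg (by positivity)]
    have h3 : (ex b i).choose (ex a i) ≤ 2 ^ m :=
      (Nat.choose_le_two_pow _ _).trans (Nat.pow_le_pow_right (by norm_num) (b.1 i).2.le)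
    exact_mod_cast h3
  · left
    push Not at hab
    obtain ⟨i, hi⟩ := hab
    exact Finset.prod_eq_zero (Finset.mem_univ i) (by rw [Nat.choose_eq_zero_of_lt hi]; simp)

theorem card_MI (hm : 1 ≤ m) (n : ℕ) : Fintype.card (MI m n) ≤ Nat.choose (n + m - 1) n := by
  let g : MI m n → (Fin (n + 1) →₀ ℕ) := fun a => Finsupp.equivFunOnFinite.symm (Fin.cons (m - 1 - ord a) (ex a))
  have hg : Function.Injective g := by
    intro a b h
    apply ex_inj
    exact (Fin.cons_injective2 (Finsupp.equivFunOnFinite.symm.injective h)).2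
  have h1 : (Finset.univ.image g) ⊆ (Finset.univ : Finset (Fin (n + 1))).finsuppAntidiag (m - 1) := by
    intro f hf
    rw [Finset.mem_image] at hf
    obtain ⟨a, -, rfl⟩ := hf
    rw [Finset.mem_finsuppAntidiag]
    refine ⟨?_, by simp⟩
    rw [Fin.sum_univ_succ]
    have := ord_le a
    change m - 1 - ord a + ord a = m - 1
    omega
  have h2 := Finset.card_le_card h1
  rw [Finset.card_image_of_injective _ hg, Finset.card_univ, Finset.card_finsuppAntidiag_nat_eq_choose] at h2
  refine h2.trans (le_of_eq ?_)
  rw [Finset.card_univ, Fintype.card_fin]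
  rw [show n + 1 + (m - 1) - 1 = n + (m - 1) by omega, show n + m - 1 = n + (m - 1) by omega]
  rw [Nat.choose_symm_add]

end PartC2

section PartC3
variable {m n D : ℕ}

/-- Jets: polynomials of degree at most `m-1`. -/
def Pol (m n : ℕ) : Submodule ℝ (MvPolynomial (Fin n) ℝ) :=
  Submodule.span ℝ (Set.range fun a : MI m n => PM (0 : En n) (ex a))

instance : FiniteDimensional ℝ (Pol m n) := by
  unfold Pol
  exact FiniteDimensional.span_of_finite ℝ (Set.finite_range _)

theorem PM_mem (y : En n) (a : MI m n) : PM y (ex a) ∈ Pol m n := by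
  rw [PM_translate y 0 a]
  exact Submodule.sum_mem _ fun b _ => Submodule.smul_mem _ _ (Submodule.subset_span ⟨b, rfl⟩)

/-- Shifted monomials as elements of `Pol`. -/
def PQ (y : En n) (a : MI m n) : Pol m n := ⟨PM y (ex a), PM_mem y a⟩

theorem PQ_translate (y x : En n) (b : MI m n) : PQ y b = ∑ a : MI m n, tc y x b a • PQ x a := by
  apply Subtype.ext
  have h := PM_translate y x b
  simpa [PQ] using h

theorem span_PQ (y : En n) : Submodule.span ℝ (Set.range fun a : MI m n => PQ y a) = ⊤ := by
  rw [eq_top_iff]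
  rintro ⟨p, hp⟩ -
  have key : ∀ p (hp : p ∈ Pol m n), (⟨p, hp⟩ : Pol m n) ∈ Submodule.span ℝ (Set.range fun a : MI m n => PQ y a) := by
    intro p hp
    unfold Pol at hp
    induction hp using Submodule.span_induction with
    | mem x hx =>
      obtain ⟨a, rfl⟩ := hx
      have : (⟨PM 0 (ex a), PM_mem 0 a⟩ : Pol m n) = PQ 0 a := rfl
      change PQ (0 : En n) a ∈ _
      rw [PQ_translate 0 y a]
      exact Submodule.sum_mem _ fun b _ => Submodule.smul_mem _ _ (Submodule.subset_span ⟨b, rfl⟩)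
    | zero => exact Submodule.zero_mem _
    | add x z hx hz h1 h2 => exact Submodule.add_mem _ h1 h2
    | smul c x hx h1 => exact Submodule.smul_mem _ c h1
  exact key p hp

/-- Vector-valued jets. -/
abbrev WW (m n D : ℕ) : Type := Fin D → Pol m n

theorem finrank_WW (hm : 1 ≤ m) : Module.finrank ℝ (WW m n D) ≤ D * Nat.choose (n + m - 1) n := by
  rw [Module.finrank_pi_fintype]
  simp only [Finset.sum_const, Finset.card_univ, Fintype.card_fin, smul_eq_mul]
  refine Nat.mul_le_mul_left _ (le_trans ?_ (card_MI hm n))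
  unfold Pol
  exact finrank_range_le_card _

/-- The scaled frames. -/
def bb (e : En n × ℝ) (i : MI m n × Fin D) : WW m n D := Pi.single i.2 (e.2 ^ (m - ord i.1) • PQ e.1 i.1)

theorem sum_bb (e : En n × ℝ) (c : MI m n × Fin D → ℝ) (j : Fin D) :
    (∑ i, c i • bb e i) j = ∑ a, (c (a, j) * e.2 ^ (m - ord a)) • PQ e.1 a := by
  rw [Finset.sum_apply, Fintype.sum_prod_type]
  refine Finset.sum_congr rfl fun a _ => ?_
  rw [Finset.sum_eq_single j]
  · simp [bb, mul_smul]
  · intro k _ hk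
    simp [bb, Pi.single_apply, Ne.symm hk]
  · simp

theorem span_bb {e : En n × ℝ} (he : 0 < e.2) :
    Submodule.span ℝ (Set.range (bb e : MI m n × Fin D → WW m n D)) = ⊤ := by
  rw [eq_top_iff]
  intro w _
  have h1 : ∀ j, ∃ c : MI m n → ℝ, ∑ a, c a • PQ e.1 a = w j := fun j =>
    (Submodule.mem_span_range_iff_exists_fun ℝ).mp (by rw [span_PQ]; trivial)
  choose c hc using h1
  rw [Submodule.mem_span_range_iff_exists_fun]
  refine ⟨fun i => c i.2 i.1 / e.2 ^ (m - ord i.1), ?_⟩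
  funext j
  rw [sum_bb, ← hc]
  refine Finset.sum_congr rfl fun a _ => ?_
  rw [div_mul_cancel₀ _ (by positivity)]

theorem pn_bb_le {y0 y : En n} {δ0 δ : ℝ} (h0 : 0 < δ0) (h1 : δ0 ≤ δ) (hd : dist y y0 ≤ δ)
    (φ : Module.Dual ℝ (WW m n D)) :
    HT.pn bb (y0, δ0) φ ≤ (Fintype.card (MI m n) * 2 ^ (m * n)) * HT.pn bb (y, δ) φ := by
  have hδ : 0 < δ := h0.trans_le h1
  rw [HT.pn_apply, HT.pn_apply]
  have key : ∀ (β : MI m n) (j : Fin D), |φ (bb (y0, δ0) (β, j))| ≤ 2 ^ (m * n) * ∑ a, |φ (bb (y, δ) (a, j))| := by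
    intro β j
    have e1 : (bb (y0, δ0) (β, j) : WW m n D) =
        ∑ a, (tc y0 y β a * δ0 ^ (m - ord β) / δ ^ (m - ord a)) • bb (y, δ) (a, j) := by
      funext k
      rw [Finset.sum_apply]
      by_cases hk : k = j
      · subst hk
        simp only [bb, Pi.single_eq_same, Pi.smul_apply, smul_smul]
        rw [PQ_translate y0 y β, Finset.smul_sum]
        refine Finset.sum_congr rfl fun a _ => ?_
        rw [smul_smul, div_mul_cancel₀ _ (by positivity), mul_comm]
      · simp [bb, Pi.single_apply, hk]
    rw [e1, map_sum, Finset.mul_sum]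
    refine (Finset.abs_sum_le_sum_abs _ _).trans (Finset.sum_le_sum fun a _ => ?_)
    rw [map_smul, smul_eq_mul, abs_mul]
    refine mul_le_mul_of_nonneg_right ?_ (abs_nonneg _)
    rcases tc_bound y0 y hδ.le hd β a with h | ⟨h, h'⟩
    · rw [h]; simp
    · rw [abs_div, abs_mul, abs_of_pos (by positivity : 0 < δ0 ^ (m - ord β)), abs_of_pos (by positivity : 0 < δ ^ (m - ord a)),
        div_le_iff₀ (by positivity)]
      have hb := ord_le β
      have e2 : m - ord a = (ord β - ord a) + (m - ord β) := by omega
      rw [e2, pow_add, ← mul_assoc]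
      exact mul_le_mul h' (pow_le_pow_left₀ h0.le h1 _) (by positivity) (by positivity)
  rw [Fintype.sum_prod_type, Fintype.sum_prod_type]
  calc ∑ β, ∑ j, |φ (bb (y0, δ0) (β, j))| ≤ ∑ β : MI m n, ∑ j, 2 ^ (m * n) * ∑ a, |φ (bb (y, δ) (a, j))| :=
        Finset.sum_le_sum fun β _ => Finset.sum_le_sum fun j _ => key β j
    _ = _ := by
        rw [Finset.sum_const, ← Finset.mul_sum, Finset.card_univ, nsmul_eq_mul, Finset.sum_comm, mul_assoc]

theorem good_of_geo {κ : ℝ} (t : HT (En n) (En n × ℝ)) (h : HT.Geo κ t) :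
    HT.Good (HT.pn (bb : En n × ℝ → MI m n × Fin D → WW m n D)) (Fintype.card (MI m n) * 2 ^ (m * n)) t := by
  induction t with
  | leaf e x => simp [HT.Good]
  | node e l r hl hr =>
    obtain ⟨⟨h1, h2, h3⟩, h4, h5, h6, h7, h8, h9, h10⟩ := h
    have el := h9.edge
    have er := h10.edge
    have hd := h7 r.rep (by simp [HT.rep_mem]) l.rep (by simp [HT.rep_mem])
    have hd' := h7 l.rep (by simp [HT.rep_mem]) r.rep (by simp [HT.rep_mem])
    have hz : 0 ≤ l.edge.2 := el.2.1.le
    refine ⟨h4, ⟨fun v => ?_, fun v => ?_, fun v => ?_, fun v => ?_⟩, hl h9, hr h10⟩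
    · have hh : dist e.1 l.edge.1 ≤ e.2 := by rw [h1, el.1, dist_self]; exact h2.le
      exact pn_bb_le el.2.1 h6 hh v
    · have hh : dist e.1 r.edge.1 ≤ e.2 := by rw [h1, er.1]; exact hd'.trans h6
      exact pn_bb_le er.2.1 (by rw [h5]; exact h6) hh v
    · have hh : dist r.edge.1 l.edge.1 ≤ r.edge.2 := by rw [el.1, er.1, h5]; exact hd
      exact pn_bb_le el.2.1 h5.ge hh v
    · have hh : dist l.edge.1 r.edge.1 ≤ l.edge.2 := by rw [el.1, er.1]; exact hd'
      exact pn_bb_le er.2.1 h5.le hh v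

theorem spn_of_geo {κ : ℝ} (t : HT (En n) (En n × ℝ)) (h : HT.Geo κ t) :
    HT.Spn (bb : En n × ℝ → MI m n × Fin D → WW m n D) t := by
  induction t with
  | leaf e x => exact span_bb h.2.1
  | node e l r hl hr =>
    obtain ⟨-, -, -, -, -, -, h9, h10⟩ := h
    exact ⟨hl h9, hr h10⟩

theorem rep_of_jets {κ M : ℝ} (J : En n → WW m n D)
    (hJ : ∀ y y0 : En n, ∀ δ, 0 < δ → dist y y0 ≤ δ → ∃ c ∈ HT.cbox (MI m n × Fin D) M, J y - J y0 = ∑ i, c i • bb (y, δ) i)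
    (t : HT (En n) (En n × ℝ)) (h : HT.Geo κ t) (w : WW m n D)
    (hw : ∃ c ∈ HT.cbox (MI m n × Fin D) M, J t.rep - w = ∑ i, c i • bb t.edge i) :
    HT.Rep bb (HT.cbox (MI m n × Fin D) M) t (fun x => J x - w) := by
  induction t generalizing w with
  | leaf e x => exact hw
  | node e l r hl hr =>
    obtain ⟨⟨h1, h2, h3⟩, h4, h5, h6, h7, h8, h9, h10⟩ := h
    have el := h9.edge
    have er := h10.edge
    have hd := h7 r.rep (by simp [HT.rep_mem]) l.rep (by simp [HT.rep_mem])
    obtain ⟨c, hc, hw⟩ := hw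
    change J l.rep - w = ∑ i, c i • bb e i at hw
    refine ⟨c, hc, ?_, ?_⟩
    · rw [← hw]
      simp only [sub_sub_sub_cancel_right]
      apply hl h9
      have := hJ l.rep l.rep l.edge.2 el.2.1 (by rw [dist_self]; exact el.2.1.le)
      rwa [← el.1] at this ⊢
    · rw [← hw]
      simp only [sub_sub_sub_cancel_right]
      apply hr h10
      have := hJ r.rep l.rep r.edge.2 er.2.1 (by rw [h5]; exact hd)
      rwa [← er.1] at this ⊢

end PartC3

section PartC4
variable {m n D : ℕ}

theorem jet_mem (F : En n → Fin D → ℝ) (x : En n) (j : Fin D) : jetD m F x j ∈ Pol m n := by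
  unfold jetD
  rw [jetScalar_eq]
  exact Submodule.sum_mem _ fun a _ => Submodule.smul_mem _ _ (PM_mem x a)

/-- Jets as elements of `WW`. -/
def jW (m : ℕ) (F : En n → Fin D → ℝ) (x : En n) : WW m n D := fun j => ⟨jetD m F x j, jet_mem F x j⟩

theorem jW_apply (F : En n → Fin D → ℝ) (x : En n) (j : Fin D) :
    jW m F x j = ∑ a : MI m n, (pdL (lst (ex a)) (fun y => F y j) x / fac a) • PQ x a := by
  apply Subtype.ext
  simp [jW, jetD, jetScalar_eq, PQ]

theorem pdL_le_of_CmLE {F : En n → Fin D → ℝ} {M : ℝ} (hF : ContDiff ℝ m F) (h : CmLE m F M)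
    (L : List (Fin n)) (hL : L.length ≤ m) (x : En n) (j : Fin D) : |pdL L (fun y => F y j) x| ≤ M := by
  have hf : ContDiff ℝ m (fun y => F y j) := contDiff_pi.mp hF j
  rw [pdL_perm (perm_lst L) (hf.of_le (by exact_mod_cast hL)), ← pdalpha_eq]
  exact h _ (by rw [sum_count]; exact hL) x j

/-- Taylor polynomial function. -/
def TP (m : ℕ) (f : En n → ℝ) (y : En n) : En n → ℝ :=
  fun z => ∑ b : MI m n, (pdL (lst (ex b)) f y / fac b) * mon y (ex b) z

theorem contDiff_TP (f : En n → ℝ) (y : En n) (k : WithTop ℕ∞) : ContDiff ℝ k (TP m f y) :=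
  ContDiff.sum fun b _ => contDiff_const.mul (contDiff_mon _ _ _)

theorem mon_translate (y x : En n) (b : MI m n) (z : En n) :
    mon y (ex b) z = ∑ a : MI m n, tc y x b a * mon x (ex a) z := by
  have := congrArg (MvPolynomial.eval (fun i => z i)) (PM_translate y x b)
  simpa [eval_PM, map_sum, MvPolynomial.smul_eval] using this

theorem TP_translate (f : En n → ℝ) (y x : En n) :
    TP m f y = fun z => ∑ a : MI m n, (∑ b : MI m n, (pdL (lst (ex b)) f y / fac b) * tc y x b a) * mon x (ex a) z := by
  funext z
  unfold TP
  simp only [mon_translate y x, Finset.mul_sum, Finset.sum_mul]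
  rw [Finset.sum_comm]
  simp only [mul_assoc]

theorem jet_diff (F : En n → Fin D → ℝ) (hF : ContDiff ℝ m F) (y y0 : En n) (j : Fin D) :
    (jW m F y - jW m F y0) j =
      ∑ a : MI m n, (pdL (lst (ex a)) (fun z => F z j - TP m (fun z => F z j) y0 z) y / fac a) • PQ y a := by
  have hf : ContDiff ℝ m (fun y => F y j) := contDiff_pi.mp hF j
  rw [Pi.sub_apply, jW_apply, jW_apply]
  have e1 : ∑ b : MI m n, (pdL (lst (ex b)) (fun y => F y j) y0 / fac b) • PQ y0 b =
      ∑ a : MI m n, (∑ b : MI m n, (pdL (lst (ex b)) (fun y => F y j) y0 / fac b) * tc y0 y b a) • PQ y a := by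
    simp only [PQ_translate y0 y, Finset.smul_sum, Finset.sum_smul, smul_smul]
    rw [Finset.sum_comm]
  rw [e1, ← Finset.sum_sub_distrib]
  refine Finset.sum_congr rfl fun a _ => ?_
  refine (sub_smul _ _ (PQ y a)).symm.trans ?_
  congr 1
  have hl : (lst (ex a)).length ≤ m := by rw [lst_length]; have := ord_le a; unfold ord at this; omega
  rw [pdL_sub _ (hf.of_le (by exact_mod_cast hl)) (contDiff_TP _ _ _)]
  simp only []
  rw [TP_translate _ y0 y, pdL_poly_self, sub_div, mul_div_assoc, div_self (by have := fac_one_le a; positivity), mul_one]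

theorem rem_zero (hm : 1 ≤ m) (f : En n → ℝ) (hf : ContDiff ℝ m f) (y : En n) (L : List (Fin n)) (hL : L.length < m) :
    pdL L (fun z => f z - TP m f y z) y = 0 := by
  rw [pdL_sub _ (hf.of_le (by exact_mod_cast hL.le)) (contDiff_TP _ _ _)]
  obtain ⟨a, ha⟩ := exists_MI hm (fun i => L.count i) (by rw [sum_count]; exact hL)
  simp only []
  rw [pdL_perm (perm_lst L) (hf.of_le (by exact_mod_cast hL.le)), pdL_perm (perm_lst L) (contDiff_TP _ _ _), ← ha]
  unfold TP
  rw [pdL_poly_self, div_mul_cancel₀ _ (by have := fac_one_le a; positivity), sub_self]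

theorem pdL_TP_top (hm : 1 ≤ m) (f : En n → ℝ) (y : En n) (L : List (Fin n)) (hL : L.length = m) :
    pdL L (TP m f y) = fun _ => 0 := by
  unfold TP
  rw [pdL_sum _ _ _ fun b _ => contDiff_const.mul (contDiff_mon _ _ _)]
  funext z
  refine Finset.sum_eq_zero fun b _ => ?_
  rw [pdL_const_mul _ _ (contDiff_mon _ _ _), pdL_mon_zero _ _ _ (by have := ord_le b; unfold ord at this; omega)]
  simp

theorem jets_hJ (hm : 1 ≤ m) (hn : 1 ≤ n) {F : En n → Fin D → ℝ} {M : ℝ} (hM : 0 ≤ M) (hF : ContDiff ℝ m F) (h : CmLE m F M)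
    (y y0 : En n) (δ : ℝ) (hδ : 0 < δ) (hd : dist y y0 ≤ δ) :
    ∃ c ∈ HT.cbox (MI m n × Fin D) (n ^ m * M), jW m F y - jW m F y0 = ∑ i, c i • bb (y, δ) i := by
  refine ⟨fun i => pdL (lst (ex i.1)) (fun z => F z i.2 - TP m (fun z => F z i.2) y0 z) y / fac i.1 / δ ^ (m - ord i.1), ?_, ?_⟩
  · rintro ⟨a, j⟩
    simp only []
    have hf : ContDiff ℝ m (fun y => F y j) := contDiff_pi.mp hF j
    have hl : (lst (ex a)).length + (m - ord a) = m := by rw [lst_length]; have := ord_le a; unfold ord at *; omega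
    have hb := taylor_bound hM (hf.sub (contDiff_TP (fun z => F z j) y0 m)) y0 (rem_zero hm _ hf y0) (fun L hL z => by
      change |pdL L (fun z => F z j - TP m (fun z => F z j) y0 z) z| ≤ M
      rw [pdL_sub _ (by rw [hL]; exact hf) (contDiff_TP _ _ _), pdL_TP_top hm _ _ _ hL]
      simpa using pdL_le_of_CmLE hF h L hL.le z j) (m - ord a) (lst (ex a)) hl y
    have hfa := fac_one_le a
    rw [abs_div, abs_div, abs_of_pos (by positivity : 0 < fac a), abs_of_pos (by positivity : 0 < δ ^ (m - ord a)),
      div_le_iff₀ (by positivity)]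
    refine (div_le_self (abs_nonneg _) hfa).trans (hb.trans ?_)
    have hn' : (1:ℝ) ≤ n := by exact_mod_cast hn
    rw [← dist_eq_norm]
    gcongr
    omega
  · funext j
    rw [sum_bb, jet_diff F hF]
    refine Finset.sum_congr rfl fun a _ => ?_
    rw [div_mul_cancel₀ _ (by positivity)]

theorem rep_of_fun (hm : 1 ≤ m) (hn : 1 ≤ n) {F : En n → Fin D → ℝ} {M : ℝ} (hM : 0 ≤ M) (hF : ContDiff ℝ m F)
    (h : CmLE m F M) {κ : ℝ} (t : HT (En n) (En n × ℝ)) (ht : HT.Geo κ t) (h1 : t.edge.2 = 1) :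
    HT.Rep bb (HT.cbox (MI m n × Fin D) (n ^ m * M)) t (fun x => jW m F x) := by
  have hn' : (1:ℝ) ≤ n := by exact_mod_cast hn
  have := rep_of_jets (jW m F) (jets_hJ hm hn hM hF h) t ht 0 ⟨fun i => pdL (lst (ex i.1)) (fun z => F z i.2) t.rep / fac i.1, ?_, ?_⟩
  · simpa using this
  · rintro ⟨a, j⟩
    simp only []
    have hfa := fac_one_le a
    rw [abs_div, abs_of_pos (by positivity : 0 < fac a)]
    refine (div_le_self (abs_nonneg _) hfa).trans ?_
    refine (pdL_le_of_CmLE hF h _ (by rw [lst_length]; have := ord_le a; unfold ord at this; omega) _ j).trans ?_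
    exact le_mul_of_one_le_left hM (one_le_pow₀ hn')
  · funext j
    rw [sum_bb, sub_zero, jW_apply]
    refine Finset.sum_congr rfl fun a _ => ?_
    rw [h1, one_pow, mul_one, ht.edge.1]

end PartC4

section PartD1
variable {m n D : ℕ}

/-- Uniform bounds on derivatives up to order `m`. -/
def CB (m : ℕ) (K : ℝ) (f : En n → ℝ) : Prop :=
  ContDiff ℝ m f ∧ ∀ k ≤ m, ∀ z, ‖iteratedFDeriv ℝ k f z‖ ≤ K

theorem CB.nonneg {K : ℝ} {f : En n → ℝ} (h : CB m K f) : 0 ≤ K :=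
  (norm_nonneg _).trans (h.2 0 (Nat.zero_le _) 0)

theorem CB.mono {K K' : ℝ} {f : En n → ℝ} (h : CB m K f) (hK : K ≤ K') : CB m K' f :=
  ⟨h.1, fun k hk z => (h.2 k hk z).trans hK⟩

theorem CB.add {K K' : ℝ} {f g : En n → ℝ} (hf : CB m K f) (hg : CB m K' g) : CB m (K + K') (fun z => f z + g z) := by
  refine ⟨hf.1.add hg.1, fun k hk z => ?_⟩
  have hk' : (k : WithTop ℕ∞) ≤ m := by exact_mod_cast hk
  have : iteratedFDeriv ℝ k (f + g) z = _ :=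
    iteratedFDeriv_add_apply (hf.1.of_le hk').contDiffAt (hg.1.of_le hk').contDiffAt
  change ‖iteratedFDeriv ℝ k (f + g) z‖ ≤ _
  rw [this]
  exact (norm_add_le _ _).trans (add_le_add (hf.2 k hk z) (hg.2 k hk z))

theorem CB.const (c : ℝ) : CB m |c| (fun _ : En n => c) := by
  refine ⟨contDiff_const, fun k hk z => ?_⟩
  rcases Nat.eq_zero_or_pos k with rfl | h
  · simp
  · rw [iteratedFDeriv_const_of_ne h.ne']; simp

theorem CB.const_mul {K : ℝ} {f : En n → ℝ} (hf : CB m K f) (c : ℝ) : CB m (|c| * K) (fun z => c * f z) := by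
  refine ⟨contDiff_const.mul hf.1, fun k hk z => ?_⟩
  have hk' : (k : WithTop ℕ∞) ≤ m := by exact_mod_cast hk
  have : iteratedFDeriv ℝ k (c • f) z = _ :=
    iteratedFDeriv_const_smul_apply (hf.1.of_le hk').contDiffAt
  change ‖iteratedFDeriv ℝ k (c • f) z‖ ≤ _
  rw [this, norm_smul, Real.norm_eq_abs]
  exact mul_le_mul_of_nonneg_left (hf.2 k hk z) (abs_nonneg _)

theorem CB.mul {K K' : ℝ} {f g : En n → ℝ} (hf : CB m K f) (hg : CB m K' g) :
    CB m (2 ^ m * K * K') (fun z => f z * g z) := by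
  have h0 := hf.nonneg
  have h0' := hg.nonneg
  refine ⟨hf.1.mul hg.1, fun k hk z => ?_⟩
  have hk' : (k : WithTop ℕ∞) ≤ m := by exact_mod_cast hk
  refine (norm_iteratedFDeriv_mul_le hf.1 hg.1 z hk').trans ?_
  calc ∑ i ∈ Finset.range (k + 1), (k.choose i : ℝ) * ‖iteratedFDeriv ℝ i f z‖ * ‖iteratedFDeriv ℝ (k - i) g z‖
      ≤ ∑ i ∈ Finset.range (k + 1), (k.choose i : ℝ) * K * K' := by
        refine Finset.sum_le_sum fun i hi => ?_
        rw [Finset.mem_range] at hi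
        have h1 := hf.2 i (by omega) z
        have h2 := hg.2 (k - i) (by omega) z
        gcongr
    _ = 2 ^ k * K * K' := by
        rw [← Finset.sum_mul, ← Finset.sum_mul]
        congr 2
        exact_mod_cast Nat.sum_range_choose k
    _ ≤ _ := by
        have : (2:ℝ) ^ k ≤ 2 ^ m := pow_le_pow_right₀ (by norm_num) hk
        gcongr

theorem CB.sum {ι : Type} (s : Finset ι) {K : ℝ} {f : ι → En n → ℝ} (hf : ∀ i ∈ s, CB m K (f i)) :
    CB m (s.card * K) (fun z => ∑ i ∈ s, f i z) := by
  induction s using Finset.induction_on with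
  | empty => simpa using (CB.const (m := m) (n := n) 0)
  | insert a s ha ih =>
    simp only [Finset.sum_insert ha, Finset.card_insert_of_notMem ha]
    exact ((hf a (Finset.mem_insert_self _ _)).add (ih fun i hi => hf i (Finset.mem_insert_of_mem hi))).mono
      (le_of_eq (by push_cast; ring))

theorem CB.prod {ι : Type} (s : Finset ι) {K : ℝ} {f : ι → En n → ℝ} (hf : ∀ i ∈ s, CB m K (f i)) :
    CB m ((2 ^ m * K) ^ s.card) (fun z => ∏ i ∈ s, f i z) := by
  induction s using Finset.induction_on with
  | empty => simpa using (CB.const (m := m) (n := n) 1)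
  | insert a s ha ih =>
    simp only [Finset.prod_insert ha, Finset.card_insert_of_notMem ha]
    exact ((hf a (Finset.mem_insert_self _ _)).mul (ih fun i hi => hf i (Finset.mem_insert_of_mem hi))).mono
      (le_of_eq (by ring))

theorem CB.comp_sub {K : ℝ} {f : En n → ℝ} (hf : CB m K f) (p : En n) : CB m K (fun z => f (z - p)) := by
  refine ⟨hf.1.comp (contDiff_id.sub contDiff_const), fun k hk z => ?_⟩
  rw [iteratedFDeriv_comp_sub]
  exact hf.2 k hk _

theorem CB.scale {K : ℝ} {f : En n → ℝ} (hf : CB m K f) {δ : ℝ} (h0 : 0 < δ) (h1 : δ ≤ 1) :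
    CB m K (fun z => δ ^ m * f (δ⁻¹ • z)) := by
  have hK := hf.nonneg
  let g : En n →L[ℝ] En n := δ⁻¹ • ContinuousLinearMap.id ℝ (En n)
  have hg : ‖g‖ ≤ δ⁻¹ := by
    refine (norm_smul_le δ⁻¹ (ContinuousLinearMap.id ℝ (En n))).trans ?_
    rw [Real.norm_eq_abs, abs_of_pos (inv_pos.mpr h0)]
    exact mul_le_of_le_one_right (inv_pos.mpr h0).le ContinuousLinearMap.norm_id_le
  have hfc : ContDiff ℝ m (f ∘ g) := hf.1.comp g.contDiff
  refine ⟨contDiff_const.mul hfc, fun k hk z => ?_⟩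
  have hk' : (k : WithTop ℕ∞) ≤ m := by exact_mod_cast hk
  have : iteratedFDeriv ℝ k ((δ ^ m) • (f ∘ g)) z = _ :=
    iteratedFDeriv_const_smul_apply (hfc.of_le hk').contDiffAt
  change ‖iteratedFDeriv ℝ k ((δ ^ m) • (f ∘ g)) z‖ ≤ _
  rw [this, norm_smul, Real.norm_eq_abs, abs_of_pos (by positivity), g.iteratedFDeriv_comp_right hf.1 z hk']
  have h2 := ContinuousMultilinearMap.norm_compContinuousLinearMap_le (iteratedFDeriv ℝ k f (g z)) (fun _ => g)
  rw [Finset.prod_const, Finset.card_univ, Fintype.card_fin] at h2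
  have h3 : ‖g‖ ^ k ≤ δ⁻¹ ^ k := pow_le_pow_left₀ (norm_nonneg _) hg k
  have h4 : δ ^ m * δ⁻¹ ^ k ≤ 1 := by
    rw [inv_pow, ← div_eq_mul_inv, div_le_one (by positivity)]
    exact pow_le_pow_of_le_one h0.le h1 hk
  calc δ ^ m * _ ≤ δ ^ m * (K * δ⁻¹ ^ k) := by
        refine mul_le_mul_of_nonneg_left (h2.trans ?_) (by positivity)
        exact mul_le_mul (hf.2 k hk _) h3 (by positivity) hK
    _ = K * (δ ^ m * δ⁻¹ ^ k) := by ring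
    _ ≤ K * 1 := mul_le_mul_of_nonneg_left h4 hK
    _ = K := mul_one K

theorem CB.of_compact {f : En n → ℝ} (hf : ContDiff ℝ m f) (hs : HasCompactSupport f) : ∃ K, CB m K f := by
  have h1 : ∀ k : ℕ, ∃ C, k ≤ m → ∀ z, ‖iteratedFDeriv ℝ k f z‖ ≤ C := by
    intro k
    by_cases hk : k ≤ m
    · obtain ⟨C, hC⟩ := (hs.iteratedFDeriv (𝕜 := ℝ) k).exists_bound_of_continuous
        (hf.continuous_iteratedFDeriv (by exact_mod_cast hk))
      exact ⟨C, fun _ => hC⟩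
    · exact ⟨0, fun h => absurd h hk⟩
  choose C hC using h1
  refine ⟨∑ k ∈ Finset.range (m + 1), |C k|, hf, fun k hk z => ?_⟩
  refine (hC k hk z).trans ((le_abs_self _).trans ?_)
  exact Finset.single_le_sum (f := fun k => |C k|) (fun i _ => abs_nonneg _) (Finset.mem_range.mpr (by omega))

/-- Localized scaled monomials. -/
theorem local_mon (m n N : ℕ) (hN : 0 < N) : ∃ K : ℝ, 0 ≤ K ∧ ∀ (T : Finset (En n)), T.card ≤ N → ∀ (y : En n) (δ : ℝ),
    0 < δ → δ ≤ 1 → (∀ x ∈ T, dist x y ≤ δ) → ∀ a : MI m n, ∃ h : En n → ℝ, CB m K h ∧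
      (∀ x ∈ T, ∀ᶠ z in nhds x, h z = δ ^ (m - ord a) * mon y (ex a) z) ∧
      (∀ z, (∀ x ∈ T, 1 / N / 2 * δ ≤ dist z x) → h z = 0) := by
  have hN0 : (0:ℝ) < N := by exact_mod_cast hN
  let χ : ContDiffBump (0 : En n) := ⟨2, 3, by norm_num, by norm_num⟩
  let θ : ContDiffBump (0 : En n) := ⟨1 / N / 8, 1 / N / 4, by positivity, by
    have : (0:ℝ) < 1 / N := by positivity
    linarith⟩
  have h1 : ∀ a : MI m n, ∃ K, CB m K (fun w => mon 0 (ex a) w * χ w) := fun a =>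
    CB.of_compact ((contDiff_mon _ _ _).mul χ.contDiff) χ.hasCompactSupport.mul_left
  choose K1 hK1 using h1
  obtain ⟨K2, hK2⟩ := CB.of_compact (m := m) (f := fun w => θ w) θ.contDiff θ.hasCompactSupport
  have hK2' : 0 ≤ K2 := hK2.nonneg
  let K3 : ℝ := (2 ^ m * (1 + K2)) ^ N
  let K4 : ℝ := ∑ a, |K1 a|
  have hK4 : ∀ a, K1 a ≤ K4 := fun a => (le_abs_self _).trans
    (Finset.single_le_sum (f := fun a => |K1 a|) (fun i _ => abs_nonneg _) (Finset.mem_univ a))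
  have hK40 : 0 ≤ K4 := Finset.sum_nonneg fun i _ => abs_nonneg _
  have hK30 : 0 ≤ K3 := by positivity
  refine ⟨2 ^ m * K4 * (1 + K3), by positivity, ?_⟩
  intro T hT y δ hδ0 hδ1 hTy a
  let Θ : En n → ℝ := fun w => 1 + (-1) * ∏ x ∈ T, (1 + (-1) * θ (w - δ⁻¹ • (x - y)))
  have hΘ : CB m (1 + K3) Θ := by
    have e1 : ∀ x ∈ T, CB m (1 + K2) (fun w => 1 + (-1) * θ (w - δ⁻¹ • (x - y))) := fun x _ => by
      simpa using (CB.const (m := m) (n := n) 1).add ((hK2.comp_sub (δ⁻¹ • (x - y))).const_mul (-1))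
    have e2 := (CB.const (m := m) (n := n) 1).add ((CB.prod T e1).const_mul (-1))
    refine e2.mono ?_
    simp only [abs_one, abs_neg, one_mul]
    have : (1:ℝ) ≤ 2 ^ m * (1 + K2) := by
      have : (1:ℝ) ≤ 2 ^ m := one_le_pow₀ (by norm_num)
      nlinarith
    have := pow_le_pow_right₀ this hT
    simpa [K3] using this
  have hprod := (((hK1 a).mono (hK4 a)).mul hΘ)
  refine ⟨fun z => δ ^ m * ((mon 0 (ex a) (δ⁻¹ • (z - y)) * χ (δ⁻¹ • (z - y))) * Θ (δ⁻¹ • (z - y))),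
    (hprod.scale hδ0 hδ1).comp_sub y, ?_, ?_⟩
  · intro x hx
    have ev1 : ∀ᶠ z in nhds x, ‖δ⁻¹ • (z - y)‖ < 2 := by
      have hc : Continuous fun z : En n => ‖δ⁻¹ • (z - y)‖ := by fun_prop
      refine hc.continuousAt.eventually (gt_mem_nhds ?_)
      beta_reduce
      rw [norm_smul, Real.norm_eq_abs, abs_of_pos (inv_pos.mpr hδ0), ← dist_eq_norm]
      have := hTy x hx
      calc δ⁻¹ * dist x y ≤ δ⁻¹ * δ := by gcongr
        _ = 1 := inv_mul_cancel₀ hδ0.ne'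
        _ < 2 := by norm_num
    have ev2 : ∀ᶠ z in nhds x, ‖δ⁻¹ • (z - y) - δ⁻¹ • (x - y)‖ < 1 / N / 8 := by
      have hc : Continuous fun z : En n => ‖δ⁻¹ • (z - y) - δ⁻¹ • (x - y)‖ := by fun_prop
      refine hc.continuousAt.eventually (gt_mem_nhds ?_)
      beta_reduce
      rw [sub_self, norm_zero]; positivity
    filter_upwards [ev1, ev2] with z hz1 hz2
    have c1 : χ (δ⁻¹ • (z - y)) = 1 := χ.one_of_mem_closedBall (by rw [mem_closedBall_zero_iff]; exact hz1.le)
    have c2 : θ (δ⁻¹ • (z - y) - δ⁻¹ • (x - y)) = 1 := θ.one_of_mem_closedBall (by rw [mem_closedBall_zero_iff]; exact hz2.le)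
    have c3 : Θ (δ⁻¹ • (z - y)) = 1 := by
      simp only [Θ]
      rw [Finset.prod_eq_zero hx (by rw [c2]; ring)]; ring
    rw [c1, c3, mul_one, mul_one]
    have c4 : mon 0 (ex a) (δ⁻¹ • (z - y)) = δ⁻¹ ^ ord a * mon y (ex a) z := by
      unfold mon ord
      rw [← Finset.prod_pow_eq_pow_sum, ← Finset.prod_mul_distrib]
      refine Finset.prod_congr rfl fun i _ => ?_
      simp [mul_pow]
    rw [c4, ← mul_assoc]
    congr 1
    have := ord_le a
    by_cases hm : m = 0
    · subst hm
      have : ord a = 0 := by omega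
      simp [this]
    · rw [inv_pow, ← div_eq_mul_inv, pow_sub₀ _ hδ0.ne' (by omega), div_eq_mul_inv]
  · intro z hz
    have c3 : Θ (δ⁻¹ • (z - y)) = 0 := by
      simp only [Θ]
      rw [Finset.prod_eq_one]
      · ring
      · intro x hx
        have : θ (δ⁻¹ • (z - y) - δ⁻¹ • (x - y)) = 0 := by
          apply θ.zero_of_le_dist
          rw [dist_zero_right, ← smul_sub, sub_sub_sub_cancel_right, norm_smul, Real.norm_eq_abs, abs_of_pos (inv_pos.mpr hδ0), ← dist_eq_norm]
          change 1 / (N:ℝ) / 4 ≤ _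
          rw [inv_mul_eq_div, le_div_iff₀ hδ0]
          refine le_trans ?_ (hz x hx)
          have : (0:ℝ) < 1 / N := by positivity
          gcongr
          norm_num
        rw [this]; ring
    simp only [c3, mul_zero]

end PartD1

section PartD2
variable {m n D : ℕ}

theorem eval_sum_bb (e : En n × ℝ) (c : MI m n × Fin D → ℝ) (j : Fin D) (z : En n) :
    MvPolynomial.eval (fun i => z i) (((∑ i, c i • bb e i : WW m n D) j : Pol m n) : MvPolynomial (Fin n) ℝ) =
      ∑ a, c (a, j) * (e.2 ^ (m - ord a) * mon e.1 (ex a) z) := by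
  rw [sum_bb]
  simp [PQ, MvPolynomial.smul_eval, eval_PM, mul_assoc]

/-- The extension property of a constant, for pieces. -/
def Piece (m n N : ℕ) (K : ℝ) : Prop := ∀ (T : Finset (En n)), T.card ≤ N → ∀ (y : En n) (δ : ℝ),
    0 < δ → δ ≤ 1 → (∀ x ∈ T, dist x y ≤ δ) → ∀ a : MI m n, ∃ h : En n → ℝ, CB m K h ∧
      (∀ x ∈ T, ∀ᶠ z in nhds x, h z = δ ^ (m - ord a) * mon y (ex a) z) ∧
      (∀ z, (∀ x ∈ T, 1 / N / 2 * δ ≤ dist z x) → h z = 0)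

theorem piece_vec {N : ℕ} {K M : ℝ} (hK : 0 ≤ K) (hp : Piece m n N K) (T : Finset (En n)) (hT : T.card ≤ N)
    (e : En n × ℝ) (h0 : 0 < e.2) (h1 : e.2 ≤ 1) (hd : ∀ x ∈ T, dist x e.1 ≤ e.2) (c : MI m n × Fin D → ℝ)
    (hc : c ∈ HT.cbox (MI m n × Fin D) M) :
    ∃ H : Fin D → En n → ℝ, (∀ j, CB m (Fintype.card (MI m n) * (M * K)) (H j)) ∧
      (∀ x ∈ T, ∀ j, ∀ᶠ z in nhds x, H j z = MvPolynomial.eval (fun i => z i)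
        (((∑ i, c i • bb e i : WW m n D) j : Pol m n) : MvPolynomial (Fin n) ℝ)) ∧
      (∀ z, (∀ x ∈ T, 1 / N / 2 * e.2 ≤ dist z x) → ∀ j, H j z = 0) := by
  choose h hh1 hh2 hh3 using hp T hT e.1 e.2 h0 h1 hd
  refine ⟨fun j z => ∑ a, c (a, j) * h a z, fun j => ?_, ?_, ?_⟩
  · exact CB.sum Finset.univ fun a _ => ((hh1 a).const_mul (c (a, j))).mono
      (mul_le_mul_of_nonneg_right (hc (a, j)) hK)
  · intro x hx j
    filter_upwards [Filter.eventually_all.mpr fun a => hh2 a x hx] with z hz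
    rw [eval_sum_bb]
    simp only [hz]
  · intro z hz j
    simp [fun a => hh3 a z hz]

theorem HT.mem_node {X E : Type} (e : E) (l r : HT X E) (x : X) :
    x ∈ (HT.node e l r).leaves ↔ x ∈ l.leaves ∨ x ∈ r.leaves := by simp [HT.leaves]

theorem HT.sub_l {X E : Type} (e : E) (l r : HT X E) : l.leaves ⊆ (HT.node e l r).leaves :=
  fun x hx => (HT.mem_node e l r x).mpr (Or.inl hx)

theorem HT.sub_r {X E : Type} (e : E) (l r : HT X E) : r.leaves ⊆ (HT.node e l r).leaves :=
  fun x hx => (HT.mem_node e l r x).mpr (Or.inr hx)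

theorem ext_tree {N : ℕ} (hN : 0 < N) {K M : ℝ} (hK : 0 ≤ K) (hp : Piece m n N K) (t : HT (En n) (En n × ℝ))
    (ht : HT.Geo (1 / N) t) (hc : t.leaves.card ≤ N) (hd : ∀ x ∈ t.leaves, dist x t.edge.1 ≤ t.edge.2)
    (P : En n → WW m n D) (hP : HT.Rep bb (HT.cbox (MI m n × Fin D) M) t P) :
    ∃ F : Fin D → En n → ℝ, (∀ j, CB m ((2 * t.sz - 1) * (Fintype.card (MI m n) * (M * K))) (F j)) ∧
      (∀ x ∈ t.leaves, ∀ j, ∀ᶠ z in nhds x, F j z = MvPolynomial.eval (fun i => z i) ((P x j : Pol m n) : MvPolynomial (Fin n) ℝ)) ∧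
      (∀ z, (∀ x ∈ t.leaves, 1 / N / 2 * t.edge.2 ≤ dist z x) → ∀ j, F j z = 0) := by
  have hN0 : (0:ℝ) < N := by exact_mod_cast hN
  induction t generalizing P with
  | leaf e x =>
    obtain ⟨c, hcM, hP⟩ := hP
    obtain ⟨H, hH1, hH2, hH3⟩ := piece_vec hK hp {x} (by simpa [HT.leaves] using hc) e ht.2.1 ht.2.2 hd c hcM
    refine ⟨H, fun j => (hH1 j).mono (le_of_eq ?_), ?_, hH3⟩
    · simp only [HT.sz]; norm_num
    · intro x' hx' j
      simp only [HT.leaves, Finset.mem_singleton] at hx'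
      subst hx'
      rw [hP]
      exact hH2 x' (by simp) j
  | node e l r hl hr =>
    obtain ⟨⟨h1, h2, h3⟩, h4, h5, h6, h7, h8, h9, h10⟩ := ht
    have el := h9.edge
    have er := h10.edge
    obtain ⟨c, hcM, hPl, hPr⟩ := hP
    obtain ⟨H, hH1, hH2, hH3⟩ := piece_vec hK hp (HT.node e l r).leaves hc e h2 h3 hd c hcM
    obtain ⟨Fl, hl1, hl2, hl3⟩ := hl h9 ((Finset.card_le_card (HT.sub_l e l r)).trans hc)
      (fun x hx => by rw [el.1]; exact h7 x (by simp [hx]) _ (by simp [HT.rep_mem])) _ hPl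
    obtain ⟨Fr, hr1, hr2, hr3⟩ := hr h10 ((Finset.card_le_card (HT.sub_r e l r)).trans hc)
      (fun x hx => by rw [er.1, h5]; exact h7 x (by simp [hx]) _ (by simp [HT.rep_mem])) _ hPr
    have hpos : (0:ℝ) < 1 / N * l.edge.2 := mul_pos (by positivity) el.2.1
    refine ⟨fun j z => H j z + (Fl j z + Fr j z), fun j => ?_, ?_, ?_⟩
    · refine ((hH1 j).add ((hl1 j).add (hr1 j))).mono (le_of_eq ?_)
      simp only [HT.sz]; push_cast; ring
    · intro x hx j
      rw [HT.mem_node] at hx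
      rcases hx with hx | hx
      · have ev : ∀ᶠ z in nhds x, ∀ y ∈ r.leaves, 1 / N / 2 * r.edge.2 ≤ dist z y := by
          rw [Filter.eventually_all_finset]
          intro y hy
          have hcn : Continuous fun z : En n => dist z y := by fun_prop
          have := h8 x hx y hy
          filter_upwards [hcn.continuousAt.eventually (lt_mem_nhds (show 1 / N / 2 * r.edge.2 < dist x y by
            rw [h5]; nlinarith))] with z hz
          exact hz.le
        filter_upwards [hH2 x (HT.sub_l e l r hx) j, hl2 x hx j, ev] with z hz1 hz2 hz3
        rw [hz1, hz2, hr3 z hz3 j, add_zero]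
        rw [← map_add, ← Submodule.coe_add, ← Pi.add_apply, add_sub_cancel]
      · have ev : ∀ᶠ z in nhds x, ∀ y ∈ l.leaves, 1 / N / 2 * l.edge.2 ≤ dist z y := by
          rw [Filter.eventually_all_finset]
          intro y hy
          have hcn : Continuous fun z : En n => dist z y := by fun_prop
          have := h8 y hy x hx
          rw [dist_comm] at this
          filter_upwards [hcn.continuousAt.eventually (lt_mem_nhds (show 1 / N / 2 * l.edge.2 < dist x y by
            nlinarith))] with z hz
          exact hz.le
        filter_upwards [hH2 x (HT.sub_r e l r hx) j, hr2 x hx j, ev] with z hz1 hz2 hz3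
        rw [hz1, hz2, hl3 z hz3 j, zero_add]
        rw [← map_add, ← Submodule.coe_add, ← Pi.add_apply, add_sub_cancel]
    · intro z hz j
      have hz' : ∀ x ∈ (HT.node e l r).leaves, 1 / N / 2 * e.2 ≤ dist z x := hz
      have hle : 1 / (N:ℝ) / 2 * l.edge.2 ≤ 1 / N / 2 * e.2 := by gcongr
      simp only []
      rw [hH3 z hz' j, hl3 z (fun x hx => hle.trans (hz' x (HT.sub_l e l r hx))) j,
        hr3 z (fun x hx => by rw [h5]; exact hle.trans (hz' x (HT.sub_r e l r hx))) j]
      simp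

theorem jet_of_poly (p : Pol m n) (x : En n) :
    jetScalar m (fun z => MvPolynomial.eval (fun i => z i) (p : MvPolynomial (Fin n) ℝ)) x = p := by
  obtain ⟨c, hc⟩ := (Submodule.mem_span_range_iff_exists_fun ℝ).mp
    (show p ∈ Submodule.span ℝ (Set.range fun a : MI m n => PQ x a) by rw [span_PQ]; trivial)
  have e1 : (p : MvPolynomial (Fin n) ℝ) = ∑ a, c a • PM x (ex a) := by
    rw [← hc]; simp [PQ]
  rw [e1]
  conv_rhs => rw [← jet_repro]
  congr 1
  funext z
  simp [MvPolynomial.smul_eval, eval_PM]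

theorem jetScalar_congr {f g : En n → ℝ} {x : En n} (h : f =ᶠ[nhds x] g) : jetScalar m f x = jetScalar m g x := by
  rw [jetScalar_eq, jetScalar_eq]
  refine Finset.sum_congr rfl fun a _ => ?_
  rw [(pdL_congr h _).self_of_nhds]

theorem extension {N : ℕ} (hN : 0 < N) {K M : ℝ} (hM : 0 ≤ M) (hK : 0 ≤ K) (hp : Piece m n N K) (t : HT (En n) (En n × ℝ))
    (ht : HT.Geo (1 / N) t) (hc : t.sz ≤ N) (hd : ∀ x ∈ t.leaves, dist x t.edge.1 ≤ t.edge.2)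
    (P : En n → WW m n D) (hP : HT.Rep bb (HT.cbox (MI m n × Fin D) M) t P) :
    ∃ F : En n → Fin D → ℝ, ContDiff ℝ m F ∧ CmLE m F (2 * N * (Fintype.card (MI m n) * (M * K))) ∧
      ∀ x ∈ t.leaves, jetD m F x = fun j => ((P x j : Pol m n) : MvPolynomial (Fin n) ℝ) := by
  obtain ⟨F, hF1, hF2, -⟩ := ext_tree hN hK hp t ht (t.card_leaves_le.trans hc) hd P hP
  refine ⟨fun z j => F j z, contDiff_pi.mpr fun j => (hF1 j).1, ?_, ?_⟩
  · intro α hα x j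
    rw [pdalpha_eq]
    have hl : (lst α).length ≤ m := by rw [lst_length]; exact hα
    refine (abs_pdL_le _ ((hF1 j).1.of_le (by exact_mod_cast hl)) x).trans (((hF1 j).2 _ hl x).trans ?_)
    have : (t.sz : ℝ) ≤ N := by exact_mod_cast hc
    have h0 : 0 ≤ (Fintype.card (MI m n) : ℝ) * (M * K) := by positivity
    refine mul_le_mul_of_nonneg_right (by linarith) h0
  · intro x hx
    funext j
    unfold jetD
    rw [jetScalar_congr (hF2 x hx j), jet_of_poly]

end PartD2

section PartE1
variable {m n D : ℕ}

theorem main_induct (m n D : ℕ) (hm : 1 ≤ m) (hn : 1 ≤ n) (N : ℕ) :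
    ∃ γ : ℝ, 1 ≤ γ ∧
      ∀ S : Finset (En n), S.card ≤ N → (∀ x ∈ S, ∀ y ∈ S, dist x y ≤ 1) →
        ∀ G : En n → Set (Fin D → MvPolynomial (Fin n) ℝ),
          (∀ x ∈ S, Convex ℝ (G x)) →
          (∀ S' : Finset (En n), S' ⊆ S → S'.card ≤ 2 ^ (D * Nat.choose (n + m - 1) n) →
            ∃ F : En n → Fin D → ℝ, ContDiff ℝ m F ∧ CmLE m F 1 ∧
              ∀ x ∈ S', jetD m F x ∈ G x) →
          ∃ F : En n → Fin D → ℝ, ContDiff ℝ m F ∧ CmLE m F γ ∧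
            ∀ x ∈ S, jetD m F x ∈ G x := by
  induction N with
  | zero =>
    refine ⟨1, le_rfl, fun S hS _ G _ h => h S subset_rfl ?_⟩
    exact hS.trans (Nat.zero_le _)
  | succ N ih =>
    obtain ⟨γ, hγ, ih⟩ := ih
    obtain ⟨K, hK, hp⟩ := local_mon m n (N + 1) (Nat.succ_pos N)
    obtain ⟨C, hC, hsel⟩ := HT.sel (α := En n) (E := En n × ℝ) (W := WW m n D) (ι := MI m n × Fin D)
      (Fintype.card (MI m n) * 2 ^ (m * n)) (by positivity) (N + 1)
    have hn0 : (0:ℝ) < n := by exact_mod_cast hn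
    have hM : 0 < (n:ℝ) ^ m * γ := mul_pos (by positivity) (by linarith)
    have hCM : 0 ≤ C * ((n:ℝ) ^ m * γ) := mul_nonneg (by linarith) hM.le
    set B : ℝ := 2 * ((N + 1 : ℕ) : ℝ) * (Fintype.card (MI m n) * (C * ((n:ℝ) ^ m * γ) * K)) with hB
    have hB0 : 0 ≤ B := mul_nonneg (by positivity) (mul_nonneg (by positivity) (mul_nonneg hCM hK))
    refine ⟨1 + B, by linarith, fun S hS hdist G hG h => ?_⟩
    by_cases hcard : S.card ≤ 2 ^ (D * Nat.choose (n + m - 1) n)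
    · obtain ⟨F, h1, h2, h3⟩ := h S subset_rfl hcard
      exact ⟨F, h1, fun α hα x j => (h2 α hα x j).trans (by linarith), h3⟩
    push Not at hcard
    have hne : S.Nonempty := Finset.card_pos.mp (lt_of_le_of_lt (Nat.zero_le _) hcard)
    obtain ⟨t, htl, hts, hte, hgeo⟩ := HT.exists_geo (N + 1) (Nat.succ_pos N) (N + 1) S hS hS hne 1
      one_pos le_rfl hdist
    have key := hsel bb t (hts.trans_le hS) (good_of_geo t hgeo) (spn_of_geo t hgeo)
      (by
        rw [htl]
        exact lt_of_le_of_lt (Nat.pow_le_pow_right (by norm_num) (finrank_WW hm)) hcard)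
      (fun x => {w | (fun j => ((w j : Pol m n) : MvPolynomial (Fin n) ℝ)) ∈ G x})
      (by
        intro x hx w hw v hv a b ha hb hab
        exact hG x (htl ▸ hx) hw hv ha hb hab)
      ((n:ℝ) ^ m * γ) hM
      (by
        intro x hx
        obtain ⟨F, h1, h2, h3⟩ := ih (S.erase x)
          (by rw [Finset.card_erase_of_mem (htl ▸ hx)]; omega)
          (fun y hy z hz => hdist y (Finset.mem_of_mem_erase hy) z (Finset.mem_of_mem_erase hz)) G
          (fun y hy => hG y (Finset.mem_of_mem_erase hy))
          (fun S' hS' hc => h S' (hS'.trans (Finset.erase_subset _ _)) hc)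
        refine ⟨fun x => jW m F x, rep_of_fun hm hn (by linarith) h1 h2 t hgeo hte, fun y hy hyx => ?_⟩
        exact h3 y (Finset.mem_erase.mpr ⟨hyx, htl ▸ hy⟩))
    obtain ⟨P, hP1, hP2⟩ := key
    obtain ⟨F, h1, h2, h3⟩ := extension (Nat.succ_pos N) hCM hK hp t hgeo (hts.trans_le hS)
      (by
        intro x hx
        rw [hte, hgeo.edge.1]
        exact hdist x (htl ▸ hx) _ (htl ▸ t.rep_mem)) P hP1
    refine ⟨F, h1, fun α hα x j => (h2 α hα x j).trans (by rw [← hB]; linarith), fun x hx => ?_⟩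
    rw [← htl] at hx
    rw [h3 x hx]
    exact hP2 x hx

end PartE1

/-- **Weak finiteness principle for `C^m` jet selection** (Theorem 1.4, `C^m` flavor):
the finiteness constant is `2^(dim 𝒫⃗) = 2^(D·binom(n+m-1,n))`, and `γ` depends only on
`m, n, D` and a bound `N` on `|S|`. -/
theorem weak_finiteness_principle_Cm
    (m n D : ℕ) (hm : 1 ≤ m) (hn : 1 ≤ n) (hD : 1 ≤ D) (N : ℕ) (hN : 0 < N) :
    ∃ γ : ℝ, 0 < γ ∧
      ∀ S : Finset (En n), S.card ≤ N → (∀ x ∈ S, ∀ y ∈ S, dist x y ≤ 1) →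
        ∀ G : En n → Set (Fin D → MvPolynomial (Fin n) ℝ),
          (∀ x ∈ S, Convex ℝ (G x)) →
          (∀ x ∈ S, ∀ P ∈ G x, ∀ j, (P j).totalDegree ≤ m - 1) →
          (∀ S' : Finset (En n), S' ⊆ S → S'.card ≤ 2 ^ (D * Nat.choose (n + m - 1) n) →
            ∃ F : En n → Fin D → ℝ, ContDiff ℝ m F ∧ CmLE m F 1 ∧
              ∀ x ∈ S', jetD m F x ∈ G x) →
          ∃ F : En n → Fin D → ℝ, ContDiff ℝ m F ∧ CmLE m F γ ∧
            ∀ x ∈ S, jetD m F x ∈ G x := by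
  obtain ⟨γ, hγ, h⟩ := main_induct m n D hm hn N
  exact ⟨γ, by linarith, fun S h1 h2 G h3 _ h4 => h S h1 h2 G h3 h4⟩
end
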